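/- arXiv:1407.5291 — 2 statements merged into one kernel-verified Lean document; each statement's English description precedes it below -/
import Mathlib

section
/- Let s ≥ 2 be an integer, let c > λ_s^{-1}, and let B be an infinite set of positive integers whose counting function satisfies B(n) ≥ (1+o(1))·c·log n. For each integer n ≥ 2 for which it exists, let m(n) be the smallest positive integer with B(m(n)) = ⌊((c + λ_s^{-1})/2)·log n⌋, and let Ω_n be the collection of s-element sets ω of positive integers such that n − σ(ω) ∈ B and n − σ(ω) < m(n), where σ(ω) denotes the sum of the elements of ω. Then Σ s^{-|ω∪ω'|} · ∏_{x∈ω∪ω'} x^{-1+1/s} ≪ n^{-1/s}·(log n)^3, where the sum runs over all ordered pairs (ω, ω') of elements of Ω_n with ω ≠ ω' and ω ∩ ω' ≠ ∅, and the implied constant depends only on s, c and B. -/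
open Finset Filter

/-- `λ_s = Γ(1/s)^s / (s^s · s!)`. -/
noncomputable def lambdaS (s : ℕ) : ℝ :=
  (Real.Gamma (1 / s)) ^ s / ((s : ℝ) ^ s * (Nat.factorial s))

/-- The counting function `B(n) = |B ∩ [1, n]|` of a set of positive integers. -/
noncomputable def countB (B : Set ℕ) (n : ℕ) : ℕ := (B ∩ Set.Icc 1 n).ncard

/-!
The sets of `r` positive integers with sum `M` have total weight `∑ ∏ x^{-1+1/s} ≪ M^{-1+r/s}`, by
iterated convolution. A pair with `|ω ∩ ω'| = k`, `σ(ω) = N` and `σ(ω') = N'` splits into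
`ω ∩ ω'` of sum `t`, `ω \ ω'` of sum `N - t` and `ω' \ ω` of sum `N' - t`, so these pairs contribute
`≪ ∑ t^{-1+k/s} (N - t)^{-k/s} (N' - t)^{-k/s}`. The inequality `uv ≤ u² + v²` reduces this to
convolutions of `x^{-1+k/s}` with `y^{-2k/s}` at `N` and `N'`, which are `≪ N^{-1/s} log N` and
`≪ N'^{-1/s} log N'`.

Since `B(n)` eventually exceeds `d log n` for some `d` larger than the constant `c` with
`B(m(n)) ≤ c log n`, every `b < m(n)` is at most `n^{c/d} ≤ n / 2` for large `n`. Hence `N = n - b`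
is of order `n`, and the `O(log n)` choices for each of `N` and `N'` give `n^{-1/s} (log n)^3`.
-/

theorem sum_le_sum_of_injOn {α β M : Type*} [AddCommMonoid M] [PartialOrder M]
    [IsOrderedAddMonoid M] {S : Finset α} {T : Finset β} {f : α → M} {g : β → M} (i : α → β)
    (hi : ∀ a ∈ S, i a ∈ T) (hinj : Set.InjOn i S) (hfg : ∀ a ∈ S, f a ≤ g (i a))
    (hg : ∀ b ∈ T, 0 ≤ g b) : ∑ a ∈ S, f a ≤ ∑ b ∈ T, g b := by
  classical
  calc ∑ a ∈ S, f a ≤ ∑ a ∈ S, g (i a) := sum_le_sum hfg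
    _ = ∑ b ∈ S.image i, g b := (sum_image hinj).symm
    _ ≤ ∑ b ∈ T, g b :=
      sum_le_sum_of_subset_of_nonneg (image_subset_iff.2 hi) fun b hb _ => hg b hb

/-! ### Power sums and their convolutions -/

theorem mul_rpow_neg_one_add_le_rpow_sub_rpow {a x : ℝ} (ha : 0 ≤ a) (ha1 : a ≤ 1) (hx : 1 ≤ x) :
    a * x ^ (-1 + a) ≤ x ^ a - (x - 1) ^ a := by
  have hx0 : 0 < x := by linarith
  have hinv : -1 ≤ -x⁻¹ := neg_le_neg (inv_le_one_of_one_le₀ hx)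
  have bernoulli : (x - 1) ^ a ≤ x ^ a * (1 + a * -x⁻¹) :=
    calc (x - 1) ^ a = (x * (1 + -x⁻¹)) ^ a := by congr 1; field_simp; ring
      _ = x ^ a * (1 + -x⁻¹) ^ a := Real.mul_rpow hx0.le (by linarith)
      _ ≤ x ^ a * (1 + a * -x⁻¹) := by
        gcongr
        exact rpow_one_add_le_one_add_mul_self hinv ha ha1
  rw [Real.rpow_add hx0, Real.rpow_neg_one]
  linarith

theorem sum_Icc_rpow_neg_one_add_le {a : ℝ} (ha : 0 < a) (ha1 : a ≤ 1) (M : ℕ) :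
    ∑ x ∈ Icc 1 M, (x : ℝ) ^ (-1 + a) ≤ (M : ℝ) ^ a / a := by
  rw [le_div_iff₀' ha, mul_sum]
  induction M with
  | zero => simp [Real.zero_rpow ha.ne']
  | succ M ih =>
    have hstep := mul_rpow_neg_one_add_le_rpow_sub_rpow (x := ((M + 1 : ℕ) : ℝ)) ha.le ha1 (by simp)
    rw [sum_Icc_succ_top (by lia)]
    rw [Nat.cast_succ, add_sub_cancel_right] at hstep
    push_cast
    linarith

theorem sum_Icc_rpow_neg_le (q : ℝ) (M : ℕ) :
    ∑ x ∈ Icc 1 M, (x : ℝ) ^ (-q) ≤ (1 + Real.log M) * (1 + (M : ℝ) ^ (1 - q)) := by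
  have hterm : ∀ x ∈ Icc 1 M, (x : ℝ) ^ (-q) ≤ (x : ℝ)⁻¹ * (1 + (M : ℝ) ^ (1 - q)) := by
    intro x hx
    obtain ⟨hx1, hxM⟩ := mem_Icc.1 hx
    have hx1 : (1 : ℝ) ≤ x := by exact_mod_cast hx1
    have hM : (0 : ℝ) ≤ (M : ℝ) ^ (1 - q) := by positivity
    have hsplit : (x : ℝ) ^ (-q) = (x : ℝ)⁻¹ * (x : ℝ) ^ (1 - q) := by
      rw [← Real.rpow_neg_one, ← Real.rpow_add (by linarith)]
      ring_nf
    rw [hsplit]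
    gcongr
    rcases le_total 0 (1 - q) with h | h
    · have := Real.rpow_le_rpow (by linarith) (Nat.cast_le.2 hxM) h
      linarith
    · have := Real.rpow_le_one_of_one_le_of_nonpos hx1 h
      linarith
  have hharmonic : ∑ x ∈ Icc 1 M, (x : ℝ)⁻¹ ≤ 1 + Real.log M := by
    simpa [harmonic_eq_sum_Icc] using harmonic_le_one_add_log M
  calc ∑ x ∈ Icc 1 M, (x : ℝ) ^ (-q)
      ≤ (∑ x ∈ Icc 1 M, (x : ℝ)⁻¹) * (1 + (M : ℝ) ^ (1 - q)) := by
        rw [sum_mul]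
        exact sum_le_sum hterm
    _ ≤ (1 + Real.log M) * (1 + (M : ℝ) ^ (1 - q)) := by gcongr

theorem sum_antidiagonal_fst_rpow_neg {p : ℝ} (hp : 0 < p) (M : ℕ) :
    ∑ z ∈ antidiagonal M, (z.1 : ℝ) ^ (-p) = ∑ x ∈ Icc 1 M, (x : ℝ) ^ (-p) := by
  rw [Nat.sum_antidiagonal_eq_sum_range_succ fun x _ => (x : ℝ) ^ (-p)]
  refine (sum_subset (fun x hx => by simp at hx ⊢; lia) fun x hx hx' => ?_).symm
  obtain rfl : x = 0 := by simp at hx hx'; lia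
  simp [Real.zero_rpow (neg_ne_zero.2 hp.ne')]

-- In `x + y = M` one of the summands is at least `M / 2`, and its power may be pulled out.
theorem sum_antidiagonal_rpow_neg_mul_rpow_neg_le {p q : ℝ} (hp : 0 < p) (hq : 0 < q) (M : ℕ) :
    ∑ z ∈ antidiagonal M, (z.1 : ℝ) ^ (-p) * (z.2 : ℝ) ^ (-q) ≤
      ((M : ℝ) / 2) ^ (-q) * ∑ x ∈ Icc 1 M, (x : ℝ) ^ (-p) +
        ((M : ℝ) / 2) ^ (-p) * ∑ x ∈ Icc 1 M, (x : ℝ) ^ (-q) := by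
  rcases M.eq_zero_or_pos with rfl | hM
  · simp [Real.zero_rpow (neg_ne_zero.2 hp.ne')]
  have hM0 : (0 : ℝ) < M / 2 := by positivity
  have hterm : ∀ z ∈ antidiagonal M, (z.1 : ℝ) ^ (-p) * (z.2 : ℝ) ^ (-q) ≤
      ((M : ℝ) / 2) ^ (-q) * (z.1 : ℝ) ^ (-p) + ((M : ℝ) / 2) ^ (-p) * (z.2 : ℝ) ^ (-q) := by
    rintro ⟨x, y⟩ hxy
    have hadd : (x : ℝ) + y = M := by exact_mod_cast mem_antidiagonal.1 hxy
    have hx : 0 ≤ (x : ℝ) ^ (-p) := by positivity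
    have hy : 0 ≤ (y : ℝ) ^ (-q) := by positivity
    rcases le_total ((M : ℝ) / 2) x with h | h
    · have hpow := Real.rpow_le_rpow_of_nonpos hM0 h (neg_nonpos.2 hp.le)
      exact (mul_le_mul_of_nonneg_right hpow hy).trans (le_add_of_nonneg_left (by positivity))
    · have hpow := Real.rpow_le_rpow_of_nonpos hM0 (by linarith : (M : ℝ) / 2 ≤ y)
        (neg_nonpos.2 hq.le)
      rw [mul_comm]
      exact (mul_le_mul_of_nonneg_right hpow hx).trans (le_add_of_nonneg_right (by positivity))
  have hsnd : ∑ z ∈ antidiagonal M, (z.2 : ℝ) ^ (-q) = ∑ x ∈ Icc 1 M, (x : ℝ) ^ (-q) := by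
    rw [← sum_antidiagonal_fst_rpow_neg hq, ← Nat.sum_antidiagonal_swap]
    rfl
  calc _ ≤ ∑ z ∈ antidiagonal M, (((M : ℝ) / 2) ^ (-q) * (z.1 : ℝ) ^ (-p) +
        ((M : ℝ) / 2) ^ (-p) * (z.2 : ℝ) ^ (-q)) := sum_le_sum hterm
    _ = _ := by
      rw [sum_add_distrib, ← mul_sum, ← mul_sum, sum_antidiagonal_fst_rpow_neg hp, hsnd]

theorem exists_sum_antidiagonal_rpow_le {a b : ℝ} (ha : 0 < a) (ha1 : a < 1) (hb : 0 < b)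
    (hb1 : b < 1) :
    ∃ C : ℝ, 0 ≤ C ∧ ∀ M : ℕ,
      ∑ z ∈ antidiagonal M, (z.1 : ℝ) ^ (-1 + a) * (z.2 : ℝ) ^ (-1 + b) ≤
        C * (M : ℝ) ^ (-1 + (a + b)) := by
  refine ⟨2⁻¹ ^ (-1 + b) / a + 2⁻¹ ^ (-1 + a) / b, by positivity, fun M => ?_⟩
  have hsplit := sum_antidiagonal_rpow_neg_mul_rpow_neg_le (sub_pos.2 ha1) (sub_pos.2 hb1) M
  rw [show -(1 - a) = -1 + a by ring, show -(1 - b) = -1 + b by ring] at hsplit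
  rcases M.eq_zero_or_pos with rfl | hM
  · refine hsplit.trans ?_
    simp only [Icc_eq_empty_of_lt zero_lt_one, sum_empty, mul_zero, add_zero]
    positivity
  have hM0 : (0 : ℝ) < M := by exact_mod_cast hM
  calc _ ≤ ((M : ℝ) / 2) ^ (-1 + b) * ((M : ℝ) ^ a / a) +
        ((M : ℝ) / 2) ^ (-1 + a) * ((M : ℝ) ^ b / b) := by
        refine hsplit.trans ?_
        gcongr
        · exact sum_Icc_rpow_neg_one_add_le ha ha1.le M
        · exact sum_Icc_rpow_neg_one_add_le hb hb1.le M
    _ = (2⁻¹ ^ (-1 + b) / a + 2⁻¹ ^ (-1 + a) / b) * (M : ℝ) ^ (-1 + (a + b)) := by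
      rw [div_eq_mul_inv (M : ℝ) 2, Real.mul_rpow hM0.le (by norm_num),
        Real.mul_rpow hM0.le (by norm_num), Real.rpow_add hM0, Real.rpow_add hM0,
        Real.rpow_add hM0, Real.rpow_add hM0]
      ring

theorem exists_sum_antidiagonal_rpow_le_log {a e : ℝ} (he : 0 < e) (hea : e ≤ a)
    (hae : a ≤ 1 - e) :
    ∃ C : ℝ, 0 ≤ C ∧ ∀ M : ℕ,
      ∑ z ∈ antidiagonal M, (z.1 : ℝ) ^ (-1 + a) * (z.2 : ℝ) ^ (-(2 * a)) ≤
        C * ((M : ℝ) ^ (-e) * (1 + Real.log M)) := by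
  have ha : 0 < a := by linarith
  refine ⟨2⁻¹ ^ (-(2 * a)) / a + 2⁻¹ ^ (-1 + a) * 2, by positivity, fun M => ?_⟩
  have hsplit := sum_antidiagonal_rpow_neg_mul_rpow_neg_le (p := 1 - a) (q := 2 * a)
    (by linarith) (by linarith) M
  rw [show -(1 - a) = -1 + a by ring] at hsplit
  have hlog := Real.log_natCast_nonneg M
  rcases M.eq_zero_or_pos with rfl | hM
  · refine hsplit.trans ?_
    simp only [Icc_eq_empty_of_lt zero_lt_one, sum_empty, mul_zero, add_zero]
    positivity
  have hM0 : (0 : ℝ) < M := by exact_mod_cast hM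
  have hM1 : (1 : ℝ) ≤ M := by exact_mod_cast hM
  have hadd : (M : ℝ) ^ (-(2 * a)) * (M : ℝ) ^ a = (M : ℝ) ^ (-a) := by
    rw [← Real.rpow_add hM0]
    ring_nf
  have hadd' : (M : ℝ) ^ (-1 + a) * (M : ℝ) ^ (1 - 2 * a) = (M : ℝ) ^ (-a) := by
    rw [← Real.rpow_add hM0]
    ring_nf
  calc _ ≤ ((M : ℝ) / 2) ^ (-(2 * a)) * ((M : ℝ) ^ a / a) +
        ((M : ℝ) / 2) ^ (-1 + a) * ((1 + Real.log M) * (1 + (M : ℝ) ^ (1 - 2 * a))) := by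
        refine hsplit.trans ?_
        gcongr
        · exact sum_Icc_rpow_neg_one_add_le ha (by linarith) M
        · exact sum_Icc_rpow_neg_le (2 * a) M
    _ = 2⁻¹ ^ (-(2 * a)) / a * ((M : ℝ) ^ (-a) * 1) +
        2⁻¹ ^ (-1 + a) * (((M : ℝ) ^ (-1 + a) + (M : ℝ) ^ (-a)) * (1 + Real.log M)) := by
      rw [div_eq_mul_inv (M : ℝ) 2, Real.mul_rpow hM0.le (by norm_num),
        Real.mul_rpow hM0.le (by norm_num)]
      linear_combination 2⁻¹ ^ (-(2 * a)) / a * hadd +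
        2⁻¹ ^ (-1 + a) * (1 + Real.log M) * hadd'
    _ ≤ 2⁻¹ ^ (-(2 * a)) / a * ((M : ℝ) ^ (-e) * (1 + Real.log M)) +
        2⁻¹ ^ (-1 + a) * (((M : ℝ) ^ (-e) + (M : ℝ) ^ (-e)) * (1 + Real.log M)) := by
      gcongr <;> linarith
    _ = _ := by ring

/-! ### Weighted counts of sets with prescribed sum -/

/-- The weight `∏_{x ∈ ω} x^{-1+a}` of a finite set `ω`. For `a = 1/s` it is, up to the factor
`s^{-|ω|}`, the probability that `ω` is contained in a random sequence of pseudo `s`-th powers. -/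
noncomputable def powWeight (a : ℝ) (ω : Finset ℕ) : ℝ := ∏ x ∈ ω, (x : ℝ) ^ (-1 + a)

theorem powWeight_nonneg (a : ℝ) (ω : Finset ℕ) : 0 ≤ powWeight a ω :=
  prod_nonneg fun _ _ => by positivity

theorem powWeight_union (a : ℝ) (ω ω' : Finset ℕ) :
    powWeight a (ω ∪ ω') =
      powWeight a (ω ∩ ω') * (powWeight a (ω \ ω') * powWeight a (ω' \ ω)) := by
  rw [← union_sdiff_self_eq_union, powWeight, prod_union disjoint_sdiff,
    ← prod_inter_mul_prod_sdiff ω ω', mul_assoc]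
  rfl

/-- The sets of `r` positive integers whose sum is `M`, i.e. the partitions of `M` into `r`
distinct parts. -/
def distinctPartitions (r M : ℕ) : Finset (Finset ℕ) :=
  {ω ∈ powersetCard r (Icc 1 M) | ω.sum id = M}

theorem mem_distinctPartitions {r M : ℕ} {ω : Finset ℕ} :
    ω ∈ distinctPartitions r M ↔ #ω = r ∧ 0 ∉ ω ∧ ω.sum id = M := by
  simp only [distinctPartitions, mem_filter, mem_powersetCard]
  constructor
  · rintro ⟨⟨hsub, hcard⟩, hsum⟩
    exact ⟨hcard, fun h => by simpa using hsub h, hsum⟩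
  · rintro ⟨hcard, hzero, rfl⟩
    refine ⟨⟨fun x hx => mem_Icc.2 ⟨?_, ?_⟩, hcard⟩, rfl⟩
    · exact Nat.one_le_iff_ne_zero.2 (ne_of_mem_of_not_mem hx hzero)
    · exact single_le_sum (f := id) (fun _ _ => Nat.zero_le _) hx

/-- The total weight of the sets of `r` positive integers with sum `M`. -/
noncomputable def partitionWeight (a : ℝ) (r M : ℕ) : ℝ :=
  ∑ ω ∈ distinctPartitions r M, powWeight a ω

theorem partitionWeight_nonneg (a : ℝ) (r M : ℕ) : 0 ≤ partitionWeight a r M :=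
  sum_nonneg fun ω _ => powWeight_nonneg a ω

theorem partitionWeight_one_le (a : ℝ) (M : ℕ) : partitionWeight a 1 M ≤ (M : ℝ) ^ (-1 + a) := by
  have hsub : distinctPartitions 1 M ⊆ {{M}} := by
    intro ω hω
    obtain ⟨hcard, -, hsum⟩ := mem_distinctPartitions.1 hω
    obtain ⟨x, rfl⟩ := card_eq_one.1 hcard
    simpa using hsum
  refine (sum_le_sum_of_subset_of_nonneg hsub fun ω _ _ => powWeight_nonneg a ω).trans_eq ?_
  simp [powWeight]

theorem partitionWeight_succ_le (a : ℝ) (r M : ℕ) :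
    partitionWeight a (r + 1) M ≤
      ∑ z ∈ antidiagonal M, (z.1 : ℝ) ^ (-1 + a) * partitionWeight a r z.2 := by
  have hsup {ω} (hω : ω ∈ distinctPartitions (r + 1) M) : ω.sup id ∈ ω := by
    have hcard : 0 < #ω := by rw [(mem_distinctPartitions.1 hω).1]; exact r.succ_pos
    obtain ⟨x, hx, hsup⟩ := exists_mem_eq_sup ω (card_pos.1 hcard) id
    exact hsup ▸ hx
  simp only [partitionWeight, mul_sum]
  rw [sum_sigma']
  refine sum_le_sum_of_injOn (fun ω => ⟨(ω.sup id, (ω.erase (ω.sup id)).sum id),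
    ω.erase (ω.sup id)⟩) (fun ω hω => ?_) (fun ω hω ω' hω' h => ?_) (fun ω hω => ?_)
    fun z _ => mul_nonneg (by positivity) (powWeight_nonneg a _)
  · obtain ⟨hcard, hzero, hsum⟩ := mem_distinctPartitions.1 hω
    refine mem_sigma.2 ⟨mem_antidiagonal.2 ?_, mem_distinctPartitions.2 ⟨?_, ?_, rfl⟩⟩
    · exact (add_sum_erase ω id (hsup hω)).trans hsum
    · rw [card_erase_of_mem (hsup hω), hcard, Nat.add_sub_cancel]
    · exact fun h => hzero (mem_of_mem_erase h)
  · simp only [Sigma.mk.injEq, Prod.mk.injEq, heq_eq_eq] at h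
    rw [← insert_erase (hsup hω), ← insert_erase (hsup hω'), h.2, h.1.1]
  · exact (mul_prod_erase ω (fun x : ℕ => (x : ℝ) ^ (-1 + a)) (hsup hω)).ge

theorem exists_partitionWeight_le {a : ℝ} (ha : 0 < a) {r : ℕ} (hr : 1 ≤ r) (hra : r * a ≤ 1) :
    ∃ C : ℝ, 0 ≤ C ∧ ∀ M : ℕ, partitionWeight a r M ≤ C * (M : ℝ) ^ (-1 + r * a) := by
  induction r, hr using Nat.le_induction with
  | base => exact ⟨1, zero_le_one, fun M => by simpa using partitionWeight_one_le a M⟩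
  | succ r hr ih =>
    have hr1 : (1 : ℝ) ≤ r := by exact_mod_cast hr
    have hadd : ((r + 1 : ℕ) : ℝ) * a = a + r * a := by push_cast; ring
    rw [hadd] at hra ⊢
    obtain ⟨C, hC, hpartition⟩ := ih (by linarith)
    obtain ⟨D, hD, hconv⟩ := exists_sum_antidiagonal_rpow_le (a := a) (b := r * a) ha
      (by nlinarith) (by positivity) (by linarith)
    refine ⟨C * D, mul_nonneg hC hD, fun M => ?_⟩
    calc partitionWeight a (r + 1) M
        ≤ ∑ z ∈ antidiagonal M, (z.1 : ℝ) ^ (-1 + a) * partitionWeight a r z.2 :=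
          partitionWeight_succ_le a r M
      _ ≤ ∑ z ∈ antidiagonal M, (z.1 : ℝ) ^ (-1 + a) * (C * (z.2 : ℝ) ^ (-1 + r * a)) := by
        gcongr with z
        exact hpartition z.2
      _ = C * ∑ z ∈ antidiagonal M, (z.1 : ℝ) ^ (-1 + a) * (z.2 : ℝ) ^ (-1 + r * a) := by
        rw [mul_sum]
        exact sum_congr rfl fun z _ => by ring
      _ ≤ C * (D * (M : ℝ) ^ (-1 + (a + r * a))) := by
        gcongr
        exact hconv M
      _ = C * D * (M : ℝ) ^ (-1 + (a + r * a)) := by ring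

/-! ### Pairs of overlapping sets -/

theorem sum_powWeight_union_card_inter_eq_le (a : ℝ) (k i j N N' : ℕ) :
    ∑ p ∈ distinctPartitions (k + i) N ×ˢ distinctPartitions (k + j) N' with #(p.1 ∩ p.2) = k,
        powWeight a (p.1 ∪ p.2) ≤
      ∑ t ∈ range (min N N' + 1), partitionWeight a k t *
        (partitionWeight a i (N - t) * partitionWeight a j (N' - t)) := by
  simp only [partitionWeight, sum_mul_sum]
  simp only [mul_sum, ← sum_product']
  rw [sum_sigma']
  refine sum_le_sum_of_injOn (fun p => ⟨(p.1 ∩ p.2).sum id, (p.1 ∩ p.2, p.1 \ p.2, p.2 \ p.1)⟩)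
    (fun p hp => ?_) (fun p _ q _ h => ?_) (fun p _ => (powWeight_union a p.1 p.2).le)
    fun z _ => mul_nonneg (powWeight_nonneg a _)
      (mul_nonneg (powWeight_nonneg a _) (powWeight_nonneg a _))
  · simp only [mem_filter, mem_product, mem_distinctPartitions] at hp
    obtain ⟨⟨⟨hcard, hzero, hsum⟩, hcard', hzero', hsum'⟩, hinter⟩ := hp
    have hsdiff := card_sdiff_add_card_inter p.1 p.2
    have hsdiff' := card_sdiff_add_card_inter p.2 p.1
    have hadd : (p.1 ∩ p.2).sum id + (p.1 \ p.2).sum id = p.1.sum id :=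
      sum_inter_add_sum_sdiff p.1 p.2 id
    have hadd' : (p.2 ∩ p.1).sum id + (p.2 \ p.1).sum id = p.2.sum id :=
      sum_inter_add_sum_sdiff p.2 p.1 id
    rw [inter_comm p.2] at hsdiff' hadd'
    simp only [mem_sigma, mem_range, mem_product, mem_distinctPartitions]
    exact ⟨by lia, ⟨hinter, fun h => hzero (mem_inter.1 h).1, trivial⟩,
      ⟨by lia, fun h => hzero (mem_sdiff.1 h).1, by lia⟩,
      by lia, fun h => hzero' (mem_sdiff.1 h).1, by lia⟩
  · simp only [Sigma.mk.injEq, heq_eq_eq, Prod.mk.injEq] at h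
    obtain ⟨-, hinter, hsdiff, hsdiff'⟩ := h
    refine Prod.ext ?_ ?_
    · rw [← sdiff_union_inter p.1 p.2, hsdiff, hinter, sdiff_union_inter]
    · rw [← sdiff_union_inter p.2 p.1, hsdiff', inter_comm, hinter, inter_comm, sdiff_union_inter]

theorem sum_range_min_mul_le {f g : ℕ → ℝ} (hf : ∀ x, 0 ≤ f x) (N N' : ℕ) :
    ∑ t ∈ range (min N N' + 1), f t * (g (N - t) * g (N' - t)) ≤
      ∑ z ∈ antidiagonal N, f z.1 * g z.2 ^ 2 + ∑ z ∈ antidiagonal N', f z.1 * g z.2 ^ 2 := by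
  have hnonneg (x y : ℕ) : 0 ≤ f x * g y ^ 2 := mul_nonneg (hf x) (sq_nonneg _)
  have hamgm (u v : ℝ) : u * v ≤ u ^ 2 + v ^ 2 := by
    nlinarith [sq_nonneg (u - v), sq_nonneg (u + v)]
  rw [Nat.sum_antidiagonal_eq_sum_range_succ fun x y => f x * g y ^ 2,
    Nat.sum_antidiagonal_eq_sum_range_succ fun x y => f x * g y ^ 2]
  calc ∑ t ∈ range (min N N' + 1), f t * (g (N - t) * g (N' - t))
      ≤ ∑ t ∈ range (min N N' + 1), (f t * g (N - t) ^ 2 + f t * g (N' - t) ^ 2) :=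
        sum_le_sum fun t _ => by
          rw [← mul_add]
          exact mul_le_mul_of_nonneg_left (hamgm _ _) (hf t)
    _ ≤ _ := by
      rw [sum_add_distrib]
      gcongr ?_ + ?_
      · exact sum_le_sum_of_subset_of_nonneg (range_mono (by lia)) fun _ _ _ => hnonneg _ _
      · exact sum_le_sum_of_subset_of_nonneg (range_mono (by lia)) fun _ _ _ => hnonneg _ _

theorem exists_sum_range_min_rpow_le_log {b e : ℝ} (he : 0 < e) (heb : e ≤ b) (hbe : b ≤ 1 - e) :
    ∃ C : ℝ, 0 ≤ C ∧ ∀ N N' : ℕ,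
      ∑ t ∈ range (min N N' + 1), (t : ℝ) ^ (-1 + b) *
          (((N - t : ℕ) : ℝ) ^ (-b) * ((N' - t : ℕ) : ℝ) ^ (-b)) ≤
        C * ((N : ℝ) ^ (-e) * (1 + Real.log N) + (N' : ℝ) ^ (-e) * (1 + Real.log N')) := by
  obtain ⟨C, hC, hconv⟩ := exists_sum_antidiagonal_rpow_le_log he heb hbe
  have hsq (y : ℕ) : ((y : ℝ) ^ (-b)) ^ 2 = (y : ℝ) ^ (-(2 * b)) := by
    rw [← Real.rpow_mul_natCast y.cast_nonneg]
    push_cast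
    ring_nf
  refine ⟨C, hC, fun N N' => ?_⟩
  refine (sum_range_min_mul_le (f := fun x => (x : ℝ) ^ (-1 + b))
    (g := fun y => (y : ℝ) ^ (-b)) (fun x => by positivity) N N').trans ?_
  simp only [hsq]
  rw [mul_add]
  exact add_le_add (hconv N) (hconv N')

theorem exists_sum_range_min_partitionWeight_le {a : ℝ} (ha : 0 < a) {k i : ℕ} (hk : 1 ≤ k)
    (hi : 1 ≤ i) (hki : k * a + i * a = 1) :
    ∃ C : ℝ, 0 ≤ C ∧ ∀ N N' : ℕ,
      ∑ t ∈ range (min N N' + 1), partitionWeight a k t *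
          (partitionWeight a i (N - t) * partitionWeight a i (N' - t)) ≤
        C * ((N : ℝ) ^ (-a) * (1 + Real.log N) + (N' : ℝ) ^ (-a) * (1 + Real.log N')) := by
  have hak : a ≤ k * a := le_mul_of_one_le_left ha.le (by exact_mod_cast hk)
  have hai : a ≤ i * a := le_mul_of_one_le_left ha.le (by exact_mod_cast hi)
  obtain ⟨C, hC, hinter⟩ := exists_partitionWeight_le ha hk (by linarith)
  obtain ⟨C', hC', hsdiff⟩ := exists_partitionWeight_le ha hi (by linarith)
  obtain ⟨D, hD, hconv⟩ := exists_sum_range_min_rpow_le_log ha hak (by linarith)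
  rw [show -1 + i * a = -(k * a) by linarith] at hsdiff
  refine ⟨C * C' ^ 2 * D, by positivity, fun N N' => ?_⟩
  calc _ ≤ ∑ t ∈ range (min N N' + 1), C * (t : ℝ) ^ (-1 + k * a) *
        (C' * ((N - t : ℕ) : ℝ) ^ (-(k * a)) * (C' * ((N' - t : ℕ) : ℝ) ^ (-(k * a)))) := by
        gcongr with t
        · exact mul_nonneg (partitionWeight_nonneg _ _ _) (partitionWeight_nonneg _ _ _)
        · exact hinter t
        · exact partitionWeight_nonneg _ _ _
        · exact hsdiff (N - t)
        · exact hsdiff (N' - t)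
    _ = C * C' ^ 2 * ∑ t ∈ range (min N N' + 1), (t : ℝ) ^ (-1 + k * a) *
        (((N - t : ℕ) : ℝ) ^ (-(k * a)) * ((N' - t : ℕ) : ℝ) ^ (-(k * a))) := by
      rw [mul_sum]
      exact sum_congr rfl fun t _ => by ring
    _ ≤ C * C' ^ 2 *
        (D * ((N : ℝ) ^ (-a) * (1 + Real.log N) + (N' : ℝ) ^ (-a) * (1 + Real.log N'))) := by
      gcongr
      exact hconv N N'
    _ = _ := by ring

theorem exists_sum_powWeight_union_card_inter_eq_le {s k : ℕ} (hk : 1 ≤ k) (hks : k < s) :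
    ∃ C : ℝ, 0 ≤ C ∧ ∀ N N' : ℕ,
      ∑ p ∈ distinctPartitions s N ×ˢ distinctPartitions s N' with #(p.1 ∩ p.2) = k,
          powWeight (1 / s) (p.1 ∪ p.2) ≤
        C * ((N : ℝ) ^ (-(1 / s) : ℝ) * (1 + Real.log N) +
          (N' : ℝ) ^ (-(1 / s) : ℝ) * (1 + Real.log N')) := by
  obtain ⟨i, rfl⟩ := Nat.exists_eq_add_of_le hks.le
  have hs0 : (0 : ℝ) < (k + i : ℕ) := by exact_mod_cast hk.trans hks.le
  have hki : (k : ℝ) * (1 / (k + i : ℕ)) + i * (1 / (k + i : ℕ)) = 1 := by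
    rw [← add_mul, ← Nat.cast_add, mul_one_div_cancel hs0.ne']
  obtain ⟨C, hC, hsum⟩ :=
    exists_sum_range_min_partitionWeight_le (one_div_pos.2 hs0) hk (by lia) hki
  exact ⟨C, hC, fun N N' => (sum_powWeight_union_card_inter_eq_le _ k i i N N').trans (hsum N N')⟩

/-- The pairs `(ω, ω')` with `ω ∈ F`, `ω' ∈ F'`, `ω ≠ ω'` and `ω ∩ ω' ≠ ∅`: the dependent pairs in
the correlation sum. -/
def overlappingPairs (F F' : Finset (Finset ℕ)) : Finset (Finset ℕ × Finset ℕ) :=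
  {p ∈ F ×ˢ F' | p.1 ≠ p.2 ∧ (p.1 ∩ p.2).Nonempty}

theorem card_inter_mem_Ico_of_ne {α : Type*} [DecidableEq α] {r : ℕ} {ω ω' : Finset α}
    (hω : #ω = r) (hω' : #ω' = r) (hne : ω ≠ ω') (hinter : (ω ∩ ω').Nonempty) :
    #(ω ∩ ω') ∈ Ico 1 r := by
  refine mem_Ico.2 ⟨card_pos.2 hinter, hω ▸ card_lt_card ?_⟩
  refine inter_subset_left.ssubset_of_ne fun h => hne ?_
  exact eq_of_subset_of_card_le (inter_eq_left.1 h) (by rw [hω, hω'])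

theorem exists_sum_overlappingPairs_distinctPartitions_le (s : ℕ) :
    ∃ C : ℝ, 0 ≤ C ∧ ∀ N N' : ℕ,
      ∑ p ∈ overlappingPairs (distinctPartitions s N) (distinctPartitions s N'),
          powWeight (1 / s) (p.1 ∪ p.2) ≤
        C * ((N : ℝ) ^ (-(1 / s) : ℝ) * (1 + Real.log N) +
          (N' : ℝ) ^ (-(1 / s) : ℝ) * (1 + Real.log N')) := by
  have hfiber (k : Ico 1 s) := exists_sum_powWeight_union_card_inter_eq_le
    (mem_Ico.1 k.2).1 (mem_Ico.1 k.2).2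
  choose C hC hsum using hfiber
  refine ⟨∑ k, C k, sum_nonneg fun k _ => hC k, fun N N' => ?_⟩
  have hmaps : ∀ p ∈ overlappingPairs (distinctPartitions s N) (distinctPartitions s N'),
      #(p.1 ∩ p.2) ∈ Ico 1 s := by
    intro p hp
    simp only [overlappingPairs, mem_filter, mem_product, mem_distinctPartitions] at hp
    exact card_inter_mem_Ico_of_ne hp.1.1.1 hp.1.2.1 hp.2.1 hp.2.2
  rw [← sum_fiberwise_of_maps_to hmaps, sum_mul, ← sum_coe_sort (Ico 1 s)]
  refine sum_le_sum fun k _ => le_trans ?_ (hsum k N N')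
  exact sum_le_sum_of_subset_of_nonneg (filter_subset_filter _ (filter_subset _ _))
    fun p _ _ => powWeight_nonneg _ _

theorem exists_sum_overlappingPairs_le (s : ℕ) :
    ∃ C : ℝ, 0 ≤ C ∧ ∀ (Ω : Finset (Finset ℕ)) (X : ℝ),
      (∀ ω ∈ Ω, #ω = s ∧ 0 ∉ ω) →
      (∀ ω ∈ Ω, ((ω.sum id : ℕ) : ℝ) ^ (-(1 / s) : ℝ) * (1 + Real.log (ω.sum id : ℕ)) ≤ X) →
      ∑ p ∈ overlappingPairs Ω Ω, powWeight (1 / s) (p.1 ∪ p.2) ≤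
        C * (#(Ω.image (·.sum id)) : ℝ) ^ 2 * X := by
  obtain ⟨C, hC, hsum⟩ := exists_sum_overlappingPairs_distinctPartitions_le s
  refine ⟨2 * C, by positivity, fun Ω X hΩ hX => ?_⟩
  set T := Ω.image (·.sum id)
  have hmaps : ∀ p ∈ overlappingPairs Ω Ω, (p.1.sum id, p.2.sum id) ∈ T ×ˢ T := by
    intro p hp
    obtain ⟨h1, h2⟩ := mem_product.1 (mem_filter.1 hp).1
    exact mem_product.2 ⟨mem_image_of_mem _ h1, mem_image_of_mem _ h2⟩
  have hT : ∀ N ∈ T, (N : ℝ) ^ (-(1 / s) : ℝ) * (1 + Real.log N) ≤ X := forall_mem_image.2 hX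
  have hfiber : ∀ q ∈ T ×ˢ T,
      ∑ p ∈ overlappingPairs Ω Ω with (p.1.sum id, p.2.sum id) = q,
        powWeight (1 / s) (p.1 ∪ p.2) ≤ C * (X + X) := by
    rintro ⟨N, N'⟩ hq
    obtain ⟨hN, hN'⟩ := mem_product.1 hq
    refine le_trans (sum_le_sum_of_subset_of_nonneg ?_ fun p _ _ => powWeight_nonneg _ _)
      ((hsum N N').trans (mul_le_mul_of_nonneg_left (add_le_add (hT N hN) (hT N' hN')) hC))
    intro p hp
    simp only [overlappingPairs, mem_filter, mem_product, Prod.mk.injEq] at hp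
    obtain ⟨⟨⟨h1, h2⟩, hpair⟩, hN, hN'⟩ := hp
    simp only [overlappingPairs, mem_filter, mem_product, mem_distinctPartitions]
    exact ⟨⟨⟨(hΩ _ h1).1, (hΩ _ h1).2, hN⟩, (hΩ _ h2).1, (hΩ _ h2).2, hN'⟩, hpair⟩
  rw [← sum_fiberwise_of_maps_to hmaps]
  refine (sum_le_card_nsmul _ _ _ hfiber).trans_eq ?_
  rw [card_product, nsmul_eq_mul]
  push_cast
  ring

/-! ### Sets representing `n` -/

theorem countB_mono (B : Set ℕ) : Monotone (countB B) := fun _ b h =>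
  Set.ncard_le_ncard (Set.inter_subset_inter_right _ (Set.Icc_subset_Icc_right h))
    ((Set.finite_Icc 1 b).inter_of_right B)

/-- The family `Ω_n` of `s`-sets `ω` of positive integers with `n - σ(ω) ∈ B` and
`n - σ(ω) < m`. The subtraction is truncated, so this is only meaningful for `0 ∉ B`; then
`σ(ω) < n`, so restricting to subsets of `[1, n]` loses nothing. -/
def representingSets (s : ℕ) (B : Set ℕ) [DecidablePred (· ∈ B)] (m n : ℕ) :
    Finset (Finset ℕ) :=
  {ω ∈ powersetCard s (Icc 1 n) | n - ω.sum id ∈ B ∧ n - ω.sum id < m}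

section representingSets

variable {s : ℕ} {B : Set ℕ} [DecidablePred (· ∈ B)] {m n : ℕ} {ω : Finset ℕ}

theorem card_eq_of_mem_representingSets (hω : ω ∈ representingSets s B m n) : #ω = s :=
  (mem_powersetCard.1 (mem_filter.1 hω).1).2

theorem zero_notMem_of_mem_representingSets (hω : ω ∈ representingSets s B m n) : 0 ∉ ω :=
  fun h => by simpa using (mem_powersetCard.1 (mem_filter.1 hω).1).1 h

theorem sum_lt_of_mem_representingSets (hB : ∀ b ∈ B, 1 ≤ b)
    (hω : ω ∈ representingSets s B m n) : ω.sum id < n := by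
  have := hB _ (mem_filter.1 hω).2.1
  lia

theorem sum_pos_of_mem_representingSets (hs : 0 < s) (hω : ω ∈ representingSets s B m n) :
    0 < ω.sum id := by
  refine sum_pos (fun x hx => Nat.pos_of_ne_zero ?_) ?_
  · exact ne_of_mem_of_not_mem hx (zero_notMem_of_mem_representingSets hω)
  · rwa [← card_pos, card_eq_of_mem_representingSets hω]

theorem card_image_sum_representingSets_le (hB : ∀ b ∈ B, 1 ≤ b) :
    #((representingSets s B m n).image (·.sum id)) ≤ countB B m := by
  rw [← Set.ncard_coe_finset, countB]
  refine Set.ncard_le_ncard_of_injOn (n - ·) (fun N hN => ?_) (fun N hN N' hN' h => ?_)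
    ((Set.finite_Icc 1 m).inter_of_right B)
  · obtain ⟨ω, hω, rfl⟩ := mem_image.1 hN
    obtain ⟨hmem, hlt⟩ := (mem_filter.1 hω).2
    exact ⟨hmem, hB _ hmem, hlt.le⟩
  · obtain ⟨ω, hω, rfl⟩ := mem_image.1 hN
    obtain ⟨ω', hω', rfl⟩ := mem_image.1 hN'
    have := sum_lt_of_mem_representingSets hB hω
    have := sum_lt_of_mem_representingSets hB hω'
    lia

end representingSets

theorem eventually_two_mul_le_of_le_mul_log {f : ℕ → ℝ} {c d : ℝ} (hc : 0 ≤ c) (hcd : c < d)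
    (hf : ∀ᶠ n : ℕ in atTop, d * Real.log n ≤ f n) :
    ∀ᶠ n : ℕ in atTop, ∀ b : ℕ, f b ≤ c * Real.log n → 2 * b ≤ n := by
  have hd : 0 < d := hc.trans_lt hcd
  obtain ⟨j, hj⟩ := eventually_atTop.1 hf
  have hpow : ∀ᶠ n : ℕ in atTop, (2 : ℝ) ≤ (n : ℝ) ^ (1 - c / d) :=
    ((tendsto_rpow_atTop (sub_pos.2 ((div_lt_one hd).2 hcd))).comp
      tendsto_natCast_atTop_atTop).eventually_ge_atTop 2
  filter_upwards [hpow, eventually_ge_atTop (2 * j), eventually_gt_atTop 0] with n hn hnj hn0 b hb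
  rcases lt_or_ge b j with hbj | hjb
  · lia
  rcases b.eq_zero_or_pos with rfl | hb0
  · lia
  have hn0 : (0 : ℝ) < n := by exact_mod_cast hn0
  have hb_le : (b : ℝ) ≤ (n : ℝ) ^ (c / d) := by
    rw [← Real.log_le_log_iff (by exact_mod_cast hb0) (by positivity), Real.log_rpow hn0,
      div_mul_eq_mul_div, le_div_iff₀' hd]
    exact (hj b hjb).trans hb
  have : 2 * (b : ℝ) ≤ n :=
    calc 2 * (b : ℝ) ≤ (n : ℝ) ^ (1 - c / d) * (n : ℝ) ^ (c / d) := by gcongr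
      _ = n := by rw [← Real.rpow_add hn0, sub_add_cancel, Real.rpow_one]
  exact_mod_cast this

theorem exists_le_mul_sum_of_mem_representingSets {s : ℕ} (hs : 0 < s) {c d : ℝ} (hc : 0 ≤ c)
    (hcd : c < d) {B : Set ℕ} [DecidablePred (· ∈ B)]
    (hB : ∀ᶠ n : ℕ in atTop, d * Real.log n ≤ countB B n) {m : ℕ → ℕ}
    (hm : ∀ n : ℕ, 2 ≤ n → countB B (m n) ≤ c * Real.log n) :
    ∃ K : ℕ, 0 < K ∧ ∀ n : ℕ, 2 ≤ n → ∀ ω ∈ representingSets s B (m n) n, n ≤ K * ω.sum id := by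
  obtain ⟨n₀, hn₀⟩ := eventually_atTop.1 (eventually_two_mul_le_of_le_mul_log hc hcd hB)
  refine ⟨n₀ + 2, by lia, fun n hn ω hω => ?_⟩
  have hpos := sum_pos_of_mem_representingSets hs hω
  rcases le_total n n₀ with hsmall | hlarge
  · nlinarith
  · have hcount : (countB B (n - ω.sum id) : ℝ) ≤ c * Real.log n :=
      (Nat.cast_le.2 (countB_mono B (mem_filter.1 hω).2.2.le)).trans (hm n hn)
    have := hn₀ n hlarge _ hcount
    have : n ≤ 2 * ω.sum id := by lia
    exact this.trans (Nat.mul_le_mul_right _ (by lia))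

theorem rpow_neg_mul_one_add_log_le {e : ℝ} (he : 0 ≤ e) {K N n : ℕ} (hK : 0 < K) (hN : 0 < N)
    (hNn : N ≤ n) (hn : 2 ≤ n) (hnKN : n ≤ K * N) :
    (N : ℝ) ^ (-e) * (1 + Real.log N) ≤
      (K : ℝ) ^ e * (1 / Real.log 2 + 1) * ((n : ℝ) ^ (-e) * Real.log n) := by
  have hN0 : (0 : ℝ) < N := by exact_mod_cast hN
  have hK0 : (0 : ℝ) < K := by exact_mod_cast hK
  have hn0 : (0 : ℝ) < n := by exact_mod_cast hN.trans_le hNn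
  have hlog2 : 0 < Real.log 2 := Real.log_pos one_lt_two
  have hlogn : Real.log 2 ≤ Real.log n := Real.log_le_log two_pos (by exact_mod_cast hn)
  have hlogN : Real.log N ≤ Real.log n := Real.log_le_log hN0 (by exact_mod_cast hNn)
  have hpow : (N : ℝ) ^ (-e) ≤ (K : ℝ) ^ e * (n : ℝ) ^ (-e) :=
    calc (N : ℝ) ^ (-e) = (K : ℝ) ^ e * ((K : ℝ) * N) ^ (-e) := by
          rw [Real.mul_rpow hK0.le hN0.le, ← mul_assoc, ← Real.rpow_add hK0, add_neg_cancel,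
            Real.rpow_zero, one_mul]
      _ ≤ (K : ℝ) ^ e * (n : ℝ) ^ (-e) := by
        refine mul_le_mul_of_nonneg_left ?_ (by positivity)
        exact Real.rpow_le_rpow_of_nonpos hn0 (by exact_mod_cast hnKN) (neg_nonpos.2 he)
  have hlog : 1 + Real.log N ≤ (1 / Real.log 2 + 1) * Real.log n := by
    have : 1 ≤ 1 / Real.log 2 * Real.log n := by
      rwa [one_div_mul_eq_div, one_le_div hlog2]
    linarith
  calc _ ≤ ((K : ℝ) ^ e * (n : ℝ) ^ (-e)) * ((1 / Real.log 2 + 1) * Real.log n) := by gcongr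
    _ = _ := by ring

theorem stmt_12_general {s : ℕ} (hs : 0 < s) {c d : ℝ} (hcd : c < d) {B : Set ℕ}
    [DecidablePred (· ∈ B)] (hBpos : ∀ b ∈ B, 1 ≤ b)
    (hB : ∀ᶠ n : ℕ in atTop, d * Real.log n ≤ countB B n) {m : ℕ → ℕ}
    (hm : ∀ n : ℕ, 2 ≤ n → countB B (m n) ≤ c * Real.log n) :
    ∃ C : ℝ, 0 < C ∧ ∀ n : ℕ, 2 ≤ n →
      ∑ p ∈ overlappingPairs (representingSets s B (m n) n) (representingSets s B (m n) n),
          ((s : ℝ) ^ #(p.1 ∪ p.2))⁻¹ * powWeight (1 / s) (p.1 ∪ p.2) ≤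
        C * (n : ℝ) ^ (-(1 : ℝ) / s) * Real.log n ^ 3 := by
  have hc : 0 ≤ c := nonneg_of_mul_nonneg_left ((countB B (m 2)).cast_nonneg.trans (hm 2 le_rfl))
    (Real.log_pos (by norm_num))
  obtain ⟨K, hK, hsum⟩ := exists_le_mul_sum_of_mem_representingSets hs hc hcd hB hm
  obtain ⟨C, hC, hpairs⟩ := exists_sum_overlappingPairs_le s
  set A : ℝ := (K : ℝ) ^ (1 / s : ℝ) * (1 / Real.log 2 + 1)
  refine ⟨C * c ^ 2 * A + 1, by positivity, fun n hn => ?_⟩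
  set Ω := representingSets s B (m n) n
  have hcard : (#(Ω.image (·.sum id)) : ℝ) ≤ c * Real.log n :=
    (Nat.cast_le.2 (card_image_sum_representingSets_le hBpos)).trans (hm n hn)
  calc _ ≤ ∑ p ∈ overlappingPairs Ω Ω, powWeight (1 / s) (p.1 ∪ p.2) := by
        refine sum_le_sum fun p _ => mul_le_of_le_one_left (powWeight_nonneg _ _) ?_
        rw [← inv_pow]
        exact pow_le_one₀ (by positivity) (Nat.cast_inv_le_one s)
    _ ≤ C * (#(Ω.image (·.sum id)) : ℝ) ^ 2 * (A * ((n : ℝ) ^ (-(1 / s) : ℝ) * Real.log n)) :=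
        hpairs Ω _ (fun ω hω => ⟨card_eq_of_mem_representingSets hω,
          zero_notMem_of_mem_representingSets hω⟩) fun ω hω =>
            rpow_neg_mul_one_add_log_le (by positivity) hK (sum_pos_of_mem_representingSets hs hω)
              (sum_lt_of_mem_representingSets hBpos hω).le hn (hsum n hn ω hω)
    _ ≤ C * (c * Real.log n) ^ 2 * (A * ((n : ℝ) ^ (-(1 / s) : ℝ) * Real.log n)) := by gcongr
    _ = C * c ^ 2 * A * (n : ℝ) ^ (-(1 : ℝ) / s) * Real.log n ^ 3 := by
      rw [neg_div]
      ring
    _ ≤ (C * c ^ 2 * A + 1) * (n : ℝ) ^ (-(1 : ℝ) / s) * Real.log n ^ 3 := by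
      gcongr
      linarith

theorem lambdaS_nonneg (s : ℕ) : 0 ≤ lambdaS s := by
  have := Real.Gamma_nonneg_of_nonneg (one_div_nonneg.2 s.cast_nonneg)
  unfold lambdaS
  positivity

theorem eventually_mul_log_le_of_lt {f : ℕ → ℝ} {c d : ℝ} (hc : 0 < c) (hdc : d < c)
    (hf : ∀ ε : ℝ, 0 < ε → ∀ᶠ n : ℕ in atTop, (1 - ε) * (c * Real.log n) ≤ f n) :
    ∀ᶠ n : ℕ in atTop, d * Real.log n ≤ f n := by
  filter_upwards [hf (1 - d / c) (sub_pos.2 ((div_lt_one hc).2 hdc))] with n hn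
  rwa [sub_sub_cancel, ← mul_assoc, div_mul_cancel₀ _ hc.ne'] at hn

/-- Lemma 7 (Lemma `BB456`): with `Ω_n` the family of `s`-element sets `ω` of positive
integers with `n - σ(ω) ∈ B` and `n - σ(ω) < m(n)`, the correlation sum
`Σ_{ω ≠ ω' ∈ Ω_n, ω ∩ ω' ≠ ∅} s^{-|ω ∪ ω'|} ∏_{x ∈ ω ∪ ω'} x^{-1+1/s}` is
`≪ n^{-1/s} (log n)^3`. -/
theorem stmt_12 (s : ℕ) (hs : 2 ≤ s) (c : ℝ) (hc : (lambdaS s)⁻¹ < c)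
    (B : Set ℕ) [DecidablePred (· ∈ B)] (hBpos : ∀ b ∈ B, 1 ≤ b) (hBinf : B.Infinite)
    (hB : ∀ ε : ℝ, 0 < ε → ∀ᶠ n : ℕ in Filter.atTop,
      (1 - ε) * (c * Real.log n) ≤ (countB B n : ℝ))
    (m : ℕ → ℕ)
    (hm : ∀ n : ℕ, 2 ≤ n →
      1 ≤ m n ∧ countB B (m n) = ⌊((c + (lambdaS s)⁻¹) / 2) * Real.log n⌋₊ ∧
        ∀ k : ℕ, 1 ≤ k → countB B k = ⌊((c + (lambdaS s)⁻¹) / 2) * Real.log n⌋₊ → m n ≤ k) :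
    ∃ C : ℝ, 0 < C ∧ ∀ n : ℕ, 2 ≤ n →
      ∑ p ∈ (((Finset.powersetCard s (Finset.Icc 1 n)).filter
              (fun ω : Finset ℕ => n - ω.sum id ∈ B ∧ n - ω.sum id < m n)) ×ˢ
            ((Finset.powersetCard s (Finset.Icc 1 n)).filter
              (fun ω : Finset ℕ => n - ω.sum id ∈ B ∧ n - ω.sum id < m n))).filter
          (fun p : Finset ℕ × Finset ℕ => p.1 ≠ p.2 ∧ (p.1 ∩ p.2).Nonempty),
        ((s : ℝ) ^ (p.1 ∪ p.2).card)⁻¹ * ∏ x ∈ p.1 ∪ p.2, (x : ℝ) ^ (-1 + 1 / (s : ℝ)) ≤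
      C * (n : ℝ) ^ (-(1 : ℝ) / s) * (Real.log n) ^ 3 := by
  have hlambda : 0 ≤ (lambdaS s)⁻¹ := inv_nonneg.2 (lambdaS_nonneg s)
  have hB' := eventually_mul_log_le_of_lt (d := (3 * c + (lambdaS s)⁻¹) / 4) (by linarith)
    (by linarith) hB
  refine stmt_12_general (c := (c + (lambdaS s)⁻¹) / 2) (by lia) (by linarith) hBpos hB'
    fun n hn => ?_
  rw [(hm n hn).2.1]
  exact Nat.floor_le (mul_nonneg (by linarith) (Real.log_natCast_nonneg n))
end

section
/- Let s ≥ 2 be an integer. Then, as n tends to infinity through the integers, the sum over all s-tuples of integers with 1 ≤ x_s < x_{s-1} < ⋯ < x_1 and x_1 + ⋯ + x_s = n of (x_1 ⋯ x_s)^{-1+1/s} equals s^s·λ_s + O(n^{-1/(s+1)}), with an implied constant depending only on s. -/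
open Finset

/-!
Let `a = 1 / s` and `P = ∑ n, n ^ (a - 1) X ^ n`. Log-convexity of `Γ` shows that the coefficients
of `U = Γ(a) (1 - X) ^ (-a)` differ from those of `P` by `O(n ^ (a - 2))`. In
`P ^ s - U ^ s = (∑ i, P ^ i U ^ (s - 1 - i)) (P - U)` the first factor is majorized by
`((1 - X) ^ (-a)) ^ (s - 1) = (1 - X) ^ (-(1 - a))`, whose coefficients are `O(n ^ (-a))`, and the
coefficients of the second factor are absolutely summable. Hence the coefficients of `P ^ s` agree
with those of `U ^ s = Γ(a) ^ s / (1 - X)` up to `O(n ^ (-a))`. They enumerate all tuples of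
positive integers; those with two equal coordinates contribute only `O(n ^ (-2 * a))`, and the rest
are the `s!` rearrangements of the strictly decreasing ones.
-/

open Asymptotics Filter PowerSeries

theorem Gamma_add_le_rpow_mul_Gamma {x b : ℝ} (hx : 0 < x) (hb0 : 0 ≤ b) (hb1 : b ≤ 1) :
    Real.Gamma (x + b) ≤ x ^ b * Real.Gamma x := by
  rcases hb0.eq_or_lt with rfl | hb0
  · simp
  rcases hb1.eq_or_lt with rfl | hb1
  · rw [Real.Gamma_add_one hx.ne', Real.rpow_one]
  have hΓ : 0 < Real.Gamma x := Real.Gamma_pos_of_pos hx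
  calc Real.Gamma (x + b) = Real.Gamma ((1 - b) * x + b * (x + 1)) := by ring_nf
    _ ≤ Real.Gamma x ^ (1 - b) * Real.Gamma (x + 1) ^ b :=
      Real.Gamma_mul_add_mul_le_rpow_Gamma_mul_rpow_Gamma hx (by linarith) (by linarith) hb0
        (by ring)
    _ = x ^ b * (Real.Gamma x ^ (1 - b) * Real.Gamma x ^ b) := by
      rw [Real.Gamma_add_one hx.ne', Real.mul_rpow hx.le hΓ.le]
      ring
    _ = x ^ b * Real.Gamma x := by rw [← Real.rpow_add hΓ, sub_add_cancel, Real.rpow_one]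

theorem ascPochhammer_eval_mul_Gamma {b : ℝ} (hb : 0 < b) (n : ℕ) :
    (ascPochhammer ℝ n).eval b * Real.Gamma b = Real.Gamma (n + b) := by
  induction n with
  | zero => simp
  | succ k ih =>
    rw [ascPochhammer_succ_eval, Nat.cast_succ, add_right_comm, Real.Gamma_add_one (by positivity),
      ← ih]
    ring

theorem Gamma_mul_multichoose {b : ℝ} (hb : 0 < b) (n : ℕ) :
    Real.Gamma b * Ring.multichoose b n = Real.Gamma (n + b) / n.factorial := by
  rw [eq_div_iff (by positivity), ← ascPochhammer_eval_mul_Gamma hb,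
    ← Polynomial.ascPochhammer_smeval_eq_eval,
    ← Ring.factorial_nsmul_multichoose_eq_ascPochhammer, nsmul_eq_mul]
  ring

theorem multichoose_pos {b : ℝ} (hb : 0 < b) (n : ℕ) : 0 < Ring.multichoose b n := by
  have hprod : 0 < Real.Gamma b * Ring.multichoose b n := by
    rw [Gamma_mul_multichoose hb]
    exact div_pos (Real.Gamma_pos_of_pos (by positivity)) (by positivity)
  exact pos_of_mul_pos_right hprod (Real.Gamma_pos_of_pos hb).le

theorem Gamma_mul_multichoose_le_rpow {b : ℝ} (hb0 : 0 < b) (hb1 : b ≤ 1) {n : ℕ} (hn : 1 ≤ n) :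
    Real.Gamma b * Ring.multichoose b n ≤ (n : ℝ) ^ (b - 1) := by
  have hn0 : (0 : ℝ) < n := by exact_mod_cast hn
  have hΓ : 0 < Real.Gamma n := Real.Gamma_pos_of_pos hn0
  calc Real.Gamma b * Ring.multichoose b n
      = Real.Gamma (n + b) / (n * Real.Gamma n) := by
        rw [Gamma_mul_multichoose hb0, ← Real.Gamma_add_one hn0.ne', Real.Gamma_nat_eq_factorial]
    _ ≤ n ^ b * Real.Gamma n / (n * Real.Gamma n) := by
        gcongr
        exact Gamma_add_le_rpow_mul_Gamma hn0 hb0.le hb1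
    _ = (n : ℝ) ^ (b - 1) := by
        rw [mul_div_mul_right _ _ hΓ.ne', Real.rpow_sub_one hn0.ne']

theorem rpow_le_Gamma_mul_multichoose {b : ℝ} (hb0 : 0 < b) (hb1 : b ≤ 1) (n : ℕ) :
    (n + b : ℝ) ^ (b - 1) ≤ Real.Gamma b * Ring.multichoose b n := by
  have hnb : (0 : ℝ) < n + b := by positivity
  have hfactorial : (n.factorial : ℝ) ≤ (n + b) ^ (1 - b) * Real.Gamma (n + b) := by
    rw [← Real.Gamma_nat_eq_factorial]
    convert Gamma_add_le_rpow_mul_Gamma hnb (sub_nonneg.2 hb1) (by linarith) using 2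
    ring
  rw [Gamma_mul_multichoose hb0, le_div_iff₀ (by positivity), ← neg_sub, Real.rpow_neg hnb.le]
  exact inv_mul_le_of_le_mul₀ (by positivity) (Real.Gamma_pos_of_pos hnb).le hfactorial

theorem abs_rpow_sub_Gamma_mul_multichoose_le {b : ℝ} (hb0 : 0 < b) (hb1 : b ≤ 1) {n : ℕ}
    (hn : 1 ≤ n) :
    |(n : ℝ) ^ (b - 1) - Real.Gamma b * Ring.multichoose b n| ≤ (n : ℝ) ^ (b - 2) := by
  have hn0 : (0 : ℝ) < n := by exact_mod_cast hn
  have hnb : (0 : ℝ) < n + b := by positivity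
  rw [abs_of_nonneg (sub_nonneg.2 (Gamma_mul_multichoose_le_rpow hb0 hb1 hn))]
  calc (n : ℝ) ^ (b - 1) - Real.Gamma b * Ring.multichoose b n
      ≤ (n : ℝ) ^ (b - 1) - (n + b : ℝ) ^ (b - 1) := by
        gcongr
        exact rpow_le_Gamma_mul_multichoose hb0 hb1 n
    _ ≤ (n : ℝ) ^ b / n - (n : ℝ) ^ b / (n + b) := by
        rw [Real.rpow_sub_one hn0.ne', Real.rpow_sub_one hnb.ne']
        gcongr
        linarith
    _ = (n : ℝ) ^ b / n * (b / (n + b)) := by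
        field_simp
        ring
    _ ≤ (n : ℝ) ^ b / n * (1 / n) := by
        gcongr
        linarith
    _ = (n : ℝ) ^ (b - 2) := by
        rw [Real.rpow_sub hn0, Real.rpow_two]
        ring

theorem isBigO_natCast_rpow_of_le {r t : ℝ} (h : r ≤ t) :
    (fun n : ℕ ↦ (n : ℝ) ^ r) =O[atTop] fun n : ℕ ↦ (n : ℝ) ^ t := by
  refine IsBigO.of_norm_eventuallyLE ?_
  filter_upwards [eventually_ge_atTop 1] with n hn
  rw [Real.norm_of_nonneg (by positivity)]
  exact Real.rpow_le_rpow_of_exponent_le (by exact_mod_cast hn) h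

theorem isTheta_natCast_add_one_rpow (r : ℝ) :
    (fun n : ℕ ↦ (n + 1 : ℝ) ^ r) =Θ[atTop] fun n : ℕ ↦ (n : ℝ) ^ r := by
  have hequiv : (fun n : ℕ ↦ (n + 1 : ℝ)) ~[atTop] fun n : ℕ ↦ (n : ℝ) :=
    IsEquivalent.refl.add_isLittleO
      ((isLittleO_const_id_atTop (1 : ℝ)).comp_tendsto tendsto_natCast_atTop_atTop)
  exact hequiv.isTheta.rpow (.of_forall fun n ↦ by positivity) (.of_forall fun n ↦ by positivity)

theorem exists_forall_abs_le_mul_add_one_rpow {f : ℕ → ℝ} {r : ℝ}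
    (h : f =O[atTop] fun n : ℕ ↦ (n : ℝ) ^ r) :
    ∃ K > 0, ∀ n : ℕ, |f n| ≤ K * (n + 1 : ℝ) ^ r := by
  have hpos (n : ℕ) : 0 < (n + 1 : ℝ) ^ r := by positivity
  obtain ⟨K, hK, hbound⟩ :=
    bound_of_isBigO_nat_atTop (h.trans_isTheta (isTheta_natCast_add_one_rpow r).symm)
  refine ⟨K, hK, fun n ↦ ?_⟩
  simpa only [Real.norm_eq_abs, abs_of_pos (hpos n)] using hbound (hpos n).ne'

theorem isBigO_rpow_sub_Gamma_mul_multichoose {b : ℝ} (hb0 : 0 < b) (hb1 : b ≤ 1) :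
    (fun n : ℕ ↦ (n : ℝ) ^ (b - 1) - Real.Gamma b * Ring.multichoose b n) =O[atTop]
      fun n : ℕ ↦ (n : ℝ) ^ (b - 2) := by
  refine IsBigO.of_norm_eventuallyLE ?_
  filter_upwards [eventually_ge_atTop 1] with n hn
  exact abs_rpow_sub_Gamma_mul_multichoose_le hb0 hb1 hn

theorem isTheta_multichoose_rpow {b : ℝ} (hb0 : 0 < b) (hb1 : b ≤ 1) :
    (fun n : ℕ ↦ Ring.multichoose b n) =Θ[atTop] fun n : ℕ ↦ (n : ℝ) ^ (b - 1) := by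
  have hΓ : 0 < Real.Gamma b := Real.Gamma_pos_of_pos hb0
  have hnonneg (n : ℕ) : 0 ≤ Real.Gamma b * Ring.multichoose b n :=
    (mul_pos hΓ (multichoose_pos hb0 n)).le
  refine (isTheta_const_mul_left hΓ.ne').1 ⟨IsBigO.of_norm_eventuallyLE ?_,
    (isTheta_natCast_add_one_rpow (b - 1)).symm.isBigO.trans (IsBigO.of_norm_le fun n ↦ ?_)⟩
  · filter_upwards [eventually_ge_atTop 1] with n hn
    rw [Real.norm_of_nonneg (hnonneg n)]
    exact Gamma_mul_multichoose_le_rpow hb0 hb1 hn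
  · rw [Real.norm_of_nonneg (by positivity)]
    refine le_trans ?_ (rpow_le_Gamma_mul_multichoose hb0 hb1 n)
    exact Real.rpow_le_rpow_of_nonpos (by positivity) (by linarith) (by linarith)

theorem rpow_mul_rpow_le_half_add_rpow_mul {u v r q : ℝ} (hu : 0 < u) (hv : 0 < v) (hr : r ≤ 0)
    (hqr : q ≤ r) : u ^ r * v ^ q ≤ ((u + v) / 2) ^ r * (u ^ q + v ^ q) := by
  -- The larger of `u` and `v` is at least their mean; if it is `v`, exchange `v ^ (q - r)` for
  -- the larger `u ^ (q - r)`.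
  rcases le_total v u with hvu | huv
  · calc u ^ r * v ^ q ≤ ((u + v) / 2) ^ r * v ^ q := by
          gcongr ?_ * _
          exact Real.rpow_le_rpow_of_nonpos (by positivity) (by linarith) hr
      _ ≤ ((u + v) / 2) ^ r * (u ^ q + v ^ q) := by
          gcongr
          exact le_add_of_nonneg_left (by positivity)
  · calc u ^ r * v ^ q = v ^ r * (u ^ r * v ^ (q - r)) := by
          rw [Real.rpow_sub hv]
          field_simp
      _ ≤ ((u + v) / 2) ^ r * (u ^ r * u ^ (q - r)) := by
          gcongr ?_ * (_ * ?_)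
          · exact Real.rpow_le_rpow_of_nonpos (by positivity) (by linarith) hr
          · exact Real.rpow_le_rpow_of_nonpos hu huv (by linarith)
      _ ≤ ((u + v) / 2) ^ r * (u ^ q + v ^ q) := by
          rw [← Real.rpow_add hu, add_sub_cancel]
          gcongr
          exact le_add_of_nonneg_right (by positivity)

theorem summable_natCast_add_one_rpow {q : ℝ} (hq : q < -1) :
    Summable fun n : ℕ ↦ (n + 1 : ℝ) ^ q := by
  simpa using (summable_nat_add_iff 1).2 (Real.summable_nat_rpow.2 hq)

theorem sum_antidiagonal_add_one_rpow_add_le {q : ℝ} (hq : q < -1) (n : ℕ) :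
    ∑ p ∈ antidiagonal n, ((p.1 + 1 : ℝ) ^ q + (p.2 + 1 : ℝ) ^ q) ≤
      2 * ∑' m : ℕ, (m + 1 : ℝ) ^ q := by
  have hfst : ∑ p ∈ antidiagonal n, (p.1 + 1 : ℝ) ^ q ≤ ∑' m : ℕ, (m + 1 : ℝ) ^ q := by
    rw [Nat.sum_antidiagonal_eq_sum_range_succ_mk]
    exact (summable_natCast_add_one_rpow hq).sum_le_tsum _ fun m _ ↦ by positivity
  have hsnd : ∑ p ∈ antidiagonal n, (p.2 + 1 : ℝ) ^ q = ∑ p ∈ antidiagonal n, (p.1 + 1 : ℝ) ^ q :=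
    Nat.sum_antidiagonal_swap (f := fun p : ℕ × ℕ ↦ (p.1 + 1 : ℝ) ^ q)
  rw [sum_add_distrib, hsnd]
  linarith

theorem abs_mul_le_half_add_rpow_mul {f g : ℕ → ℝ} {K L r q : ℝ} (hr : r ≤ 0) (hqr : q ≤ r)
    (hf : ∀ n : ℕ, |f n| ≤ K * (n + 1 : ℝ) ^ r) (hg : ∀ n : ℕ, |g n| ≤ L * (n + 1 : ℝ) ^ q)
    (hK : 0 < K) (hL : 0 < L) (x y : ℕ) :
    |f x * g y| ≤
      K * L * ((x + y + 1 : ℝ) / 2) ^ r * ((x + 1 : ℝ) ^ q + (y + 1 : ℝ) ^ q) := by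
  calc |f x * g y| ≤ K * (x + 1 : ℝ) ^ r * (L * (y + 1 : ℝ) ^ q) := by
        rw [abs_mul]
        gcongr
        exacts [hf x, hg y]
    _ = K * L * ((x + 1 : ℝ) ^ r * (y + 1 : ℝ) ^ q) := by ring
    _ ≤ K * L * (((x + 1 + (y + 1) : ℝ) / 2) ^ r * ((x + 1 : ℝ) ^ q + (y + 1 : ℝ) ^ q)) := by
        gcongr K * L * ?_
        exact rpow_mul_rpow_le_half_add_rpow_mul x.cast_add_one_pos y.cast_add_one_pos hr hqr
    _ ≤ K * L * (((x + y + 1 : ℝ) / 2) ^ r * ((x + 1 : ℝ) ^ q + (y + 1 : ℝ) ^ q)) := by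
        gcongr _ * (?_ * _)
        exact Real.rpow_le_rpow_of_nonpos (by positivity) (by linarith) hr
    _ = K * L * ((x + y + 1 : ℝ) / 2) ^ r * ((x + 1 : ℝ) ^ q + (y + 1 : ℝ) ^ q) := by ring

theorem isBigO_coeff_mul_of_lt_neg_one {A B : ℝ⟦X⟧} {r q : ℝ} (hr : r ≤ 0) (hqr : q ≤ r)
    (hq : q < -1) (hA : (fun n ↦ coeff n A) =O[atTop] fun n : ℕ ↦ (n : ℝ) ^ r)
    (hB : (fun n ↦ coeff n B) =O[atTop] fun n : ℕ ↦ (n : ℝ) ^ q) :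
    (fun n ↦ coeff n (A * B)) =O[atTop] fun n : ℕ ↦ (n : ℝ) ^ r := by
  obtain ⟨K, hK, hA⟩ := exists_forall_abs_le_mul_add_one_rpow hA
  obtain ⟨L, hL, hB⟩ := exists_forall_abs_le_mul_add_one_rpow hB
  refine IsBigO.trans (IsBigO.of_bound
    (K * L * 2⁻¹ ^ r * (2 * ∑' m : ℕ, (m + 1 : ℝ) ^ q)) (.of_forall fun n ↦ ?_))
    (isTheta_natCast_add_one_rpow r).isBigO
  calc |coeff n (A * B)|
      ≤ ∑ p ∈ antidiagonal n, |coeff p.1 A * coeff p.2 B| := by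
        rw [coeff_mul]
        exact abs_sum_le_sum_abs _ _
    _ ≤ ∑ p ∈ antidiagonal n,
          K * L * ((n + 1 : ℝ) / 2) ^ r * ((p.1 + 1 : ℝ) ^ q + (p.2 + 1 : ℝ) ^ q) := by
        refine sum_le_sum fun p hp ↦ ?_
        rw [← mem_antidiagonal.1 hp, Nat.cast_add]
        exact abs_mul_le_half_add_rpow_mul hr hqr hA hB hK hL p.1 p.2
    _ ≤ K * L * ((n + 1 : ℝ) / 2) ^ r * (2 * ∑' m : ℕ, (m + 1 : ℝ) ^ q) := by
        rw [← mul_sum]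
        gcongr
        exact sum_antidiagonal_add_one_rpow_add_le hq n
    _ = K * L * 2⁻¹ ^ r * (2 * ∑' m : ℕ, (m + 1 : ℝ) ^ q) * ‖(n + 1 : ℝ) ^ r‖ := by
        rw [div_eq_mul_inv, Real.mul_rpow (by positivity) (by positivity),
          Real.norm_of_nonneg (by positivity)]
        ring

/-- The power series `(1 - X) ^ (-b)` for an exponent `b` in a binomial ring; its coefficients are
the multiset coefficients of `b`. -/
noncomputable def invOneSubRPow {R : Type*} [CommRing R] [BinomialRing R] (b : R) : R⟦X⟧ :=
  rescale (-1) (binomialSeries R (-b))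

namespace invOneSubRPow

variable {R : Type*} [CommRing R] [BinomialRing R]

theorem zero : invOneSubRPow (0 : R) = 1 := by
  simp [invOneSubRPow]

theorem add (b c : R) : invOneSubRPow (b + c) = invOneSubRPow b * invOneSubRPow c := by
  rw [invOneSubRPow, neg_add, binomialSeries_add, map_mul, invOneSubRPow, invOneSubRPow]

theorem pow (b : R) (k : ℕ) : invOneSubRPow b ^ k = invOneSubRPow (k * b) := by
  induction k with
  | zero => simp [zero]
  | succ k ih => rw [pow_succ, ih, ← add, Nat.cast_succ, add_one_mul]

theorem coeff_eq_multichoose (b : R) (n : ℕ) :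
    coeff n (invOneSubRPow b) = Ring.multichoose b n := by
  rw [invOneSubRPow, coeff_rescale, binomialSeries_coeff, Ring.choose_neg, Ring.multichoose_eq,
    ← Int.cast_negOnePow_natCast]
  rcases Nat.even_or_odd n with hn | hn
  · simp [Int.negOnePow_even n (by exact_mod_cast hn)]
  · simp [Int.negOnePow_odd n (by exact_mod_cast hn)]

theorem isBigO_coeff {b : ℝ} (hb0 : 0 ≤ b) (hb1 : b ≤ 1) :
    (fun n ↦ coeff n (invOneSubRPow b)) =O[atTop] fun n : ℕ ↦ (n : ℝ) ^ (b - 1) := by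
  rcases hb0.eq_or_lt with rfl | hb0
  · have hzero : (fun n ↦ coeff n (invOneSubRPow (0 : ℝ))) =ᶠ[atTop] fun _ ↦ 0 := by
      filter_upwards [eventually_ne_atTop 0] with n hn
      rw [zero, coeff_one, if_neg hn]
    exact hzero.trans_isBigO (isBigO_zero _ _)
  · simpa only [coeff_eq_multichoose] using (isTheta_multichoose_rpow hb0 hb1).isBigO

end invOneSubRPow

/-- `A` is majorized by `B` up to a positive constant, coefficient by coefficient. As the constant
is positive, the coefficients of `B` are automatically nonnegative. -/
def IsMajorizedBy (A B : ℝ⟦X⟧) : Prop :=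
  ∃ K > 0, ∀ n, |coeff n A| ≤ K * coeff n B

namespace IsMajorizedBy

variable {A A' B B' : ℝ⟦X⟧}

theorem one : IsMajorizedBy 1 1 := by
  refine ⟨1, one_pos, fun n ↦ ?_⟩
  rw [coeff_one]
  split_ifs <;> simp

theorem mul (h : IsMajorizedBy A B) (h' : IsMajorizedBy A' B') :
    IsMajorizedBy (A * A') (B * B') := by
  obtain ⟨K, hK, h⟩ := h
  obtain ⟨L, hL, h'⟩ := h'
  refine ⟨K * L, mul_pos hK hL, fun n ↦ ?_⟩
  calc |coeff n (A * A')| ≤ ∑ p ∈ antidiagonal n, |coeff p.1 A| * |coeff p.2 A'| := by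
        simp only [coeff_mul, ← abs_mul]
        exact abs_sum_le_sum_abs _ _
    _ ≤ ∑ p ∈ antidiagonal n, K * coeff p.1 B * (L * coeff p.2 B') :=
        sum_le_sum fun p _ ↦ mul_le_mul (h _) (h' _) (abs_nonneg _) ((abs_nonneg _).trans (h _))
    _ = K * L * coeff n (B * B') := by
        rw [coeff_mul, mul_sum]
        exact sum_congr rfl fun p _ ↦ by ring

theorem pow (h : IsMajorizedBy A B) (k : ℕ) : IsMajorizedBy (A ^ k) (B ^ k) := by
  induction k with
  | zero => simpa only [pow_zero] using one
  | succ k ih => simpa only [pow_succ] using ih.mul h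

theorem add (h : IsMajorizedBy A B) (h' : IsMajorizedBy A' B) : IsMajorizedBy (A + A') B := by
  obtain ⟨K, hK, h⟩ := h
  obtain ⟨L, hL, h'⟩ := h'
  refine ⟨K + L, add_pos hK hL, fun n ↦ ?_⟩
  calc |coeff n (A + A')| ≤ |coeff n A| + |coeff n A'| := by
        rw [map_add]
        exact abs_add_le _ _
    _ ≤ (K + L) * coeff n B := by linarith [h n, h' n]

theorem sum {ι : Type*} {s : Finset ι} (hs : s.Nonempty) {f : ι → ℝ⟦X⟧}
    (h : ∀ i ∈ s, IsMajorizedBy (f i) B) : IsMajorizedBy (∑ i ∈ s, f i) B :=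
  sum_induction_nonempty f (IsMajorizedBy · B) (fun _ _ ↦ add) hs h

theorem geom_sum₂ (h : IsMajorizedBy A B) (h' : IsMajorizedBy A' B) (k : ℕ) :
    IsMajorizedBy (∑ i ∈ range (k + 1), A ^ i * A' ^ (k - i)) (B ^ k) := by
  refine sum nonempty_range_add_one fun i hi ↦ ?_
  simpa only [← pow_add, Nat.add_sub_cancel' (mem_range_succ_iff.1 hi)] using
    (h.pow i).mul (h'.pow (k - i))

theorem isBigO_coeff (h : IsMajorizedBy A B) :
    (fun n ↦ coeff n A) =O[atTop] fun n ↦ coeff n B := by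
  obtain ⟨K, hK, h⟩ := h
  refine IsBigO.of_bound K (.of_forall fun n ↦ (h n).trans ?_)
  gcongr
  exact le_abs_self _

theorem of_isBigO_coeff (hB : ∀ n, 0 < coeff n B)
    (h : (fun n ↦ coeff n A) =O[atTop] fun n ↦ coeff n B) : IsMajorizedBy A B := by
  obtain ⟨K, hK, h⟩ := bound_of_isBigO_nat_atTop h
  refine ⟨K, hK, fun n ↦ ?_⟩
  simpa only [Real.norm_eq_abs, abs_of_pos (hB n)] using h (hB n).ne'

theorem of_isBigO_rpow {b : ℝ} (hb0 : 0 < b) (hb1 : b ≤ 1)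
    (h : (fun n ↦ coeff n A) =O[atTop] fun n : ℕ ↦ (n : ℝ) ^ (b - 1)) :
    IsMajorizedBy A (invOneSubRPow b) := by
  have hcoeff := invOneSubRPow.coeff_eq_multichoose b
  refine of_isBigO_coeff (fun n ↦ (hcoeff n).symm ▸ multichoose_pos hb0 n) ?_
  simpa only [hcoeff] using h.trans_isTheta (isTheta_multichoose_rpow hb0 hb1).symm

end IsMajorizedBy

/-- The generating series `∑ n, n ^ r X ^ n`. For `r ≠ 0` its constant coefficient is `0`, because
`0 ^ r = 0`, so that its powers enumerate tuples of positive integers. -/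
noncomputable def rpowSeries (r : ℝ) : ℝ⟦X⟧ :=
  mk fun n ↦ (n : ℝ) ^ r

theorem coeff_rpowSeries (r : ℝ) (n : ℕ) : coeff n (rpowSeries r) = (n : ℝ) ^ r :=
  coeff_mk _ _

theorem isBigO_coeff_of_isMajorizedBy_invOneSubRPow_pow {a : ℝ} (ha0 : 0 < a) {k : ℕ}
    (hka : k * a ≤ 1) {A : ℝ⟦X⟧} (h : IsMajorizedBy A (invOneSubRPow a ^ k)) :
    (fun n ↦ coeff n A) =O[atTop] fun n : ℕ ↦ (n : ℝ) ^ (k * a - 1) := by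
  rw [invOneSubRPow.pow] at h
  exact h.isBigO_coeff.trans (invOneSubRPow.isBigO_coeff (by positivity) hka)

theorem isBigO_coeff_rpowSeries_pow {a : ℝ} (ha0 : 0 < a) (ha1 : a ≤ 1) {k : ℕ}
    (hka : k * a ≤ 1) :
    (fun n ↦ coeff n (rpowSeries (a - 1) ^ k)) =O[atTop] fun n : ℕ ↦ (n : ℝ) ^ (k * a - 1) := by
  refine isBigO_coeff_of_isMajorizedBy_invOneSubRPow_pow ha0 hka
    ((IsMajorizedBy.of_isBigO_rpow ha0 ha1 ?_).pow k)
  simpa only [coeff_rpowSeries] using isBigO_refl _ _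

theorem isBigO_coeff_rpowSeries_pow_succ_sub {a : ℝ} (ha0 : 0 < a) (ha1 : a < 1) {k : ℕ}
    (hka : k * a ≤ 1) :
    (fun n ↦ coeff n (rpowSeries (a - 1) ^ (k + 1)) -
        Real.Gamma a ^ (k + 1) * Ring.multichoose ((k + 1 : ℕ) * a) n) =O[atTop]
      fun n : ℕ ↦ (n : ℝ) ^ (k * a - 1) := by
  set P := rpowSeries (a - 1)
  set U := C (Real.Gamma a) * invOneSubRPow a
  have hcoeffU (n : ℕ) : coeff n U = Real.Gamma a * Ring.multichoose a n := by
    rw [coeff_C_mul, invOneSubRPow.coeff_eq_multichoose]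
  have hP : IsMajorizedBy P (invOneSubRPow a) := by
    refine .of_isBigO_rpow ha0 ha1.le ?_
    simpa only [P, coeff_rpowSeries] using isBigO_refl _ _
  have hU : IsMajorizedBy U (invOneSubRPow a) := by
    refine .of_isBigO_rpow ha0 ha1.le ?_
    simpa only [hcoeffU] using (isTheta_multichoose_rpow ha0 ha1.le).isBigO.const_mul_left _
  have hPU : (fun n ↦ coeff n (P - U)) =O[atTop] fun n : ℕ ↦ (n : ℝ) ^ (a - 2) := by
    simpa only [P, map_sub, coeff_rpowSeries, hcoeffU] using
      isBigO_rpow_sub_Gamma_mul_multichoose ha0 ha1.le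
  have hUpow (n : ℕ) : coeff n (U ^ (k + 1)) =
      Real.Gamma a ^ (k + 1) * Ring.multichoose ((k + 1 : ℕ) * a) n := by
    rw [mul_pow, ← map_pow, coeff_C_mul, invOneSubRPow.pow, invOneSubRPow.coeff_eq_multichoose]
  simp only [← hUpow, ← map_sub, ← geom_sum₂_mul, Nat.add_sub_cancel]
  exact isBigO_coeff_mul_of_lt_neg_one (by linarith) (by nlinarith) (by linarith)
    (isBigO_coeff_of_isMajorizedBy_invOneSubRPow_pow ha0 hka (hP.geom_sum₂ hU k)) hPU

theorem sum_filter_not_injective_le {ι α M : Type*} [Fintype ι] [DecidableEq α]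
    [AddCommMonoid M] [PartialOrder M] [IsOrderedAddMonoid M] {S : Finset (ι → α)}
    {F : (ι → α) → M} (hF : ∀ x, 0 ≤ F x) :
    ∑ x ∈ S with ¬Function.Injective x, F x ≤
      ∑ p ∈ (univ : Finset ι).offDiag, ∑ x ∈ S with x p.1 = x p.2, F x := by
  simp only [sum_filter]
  rw [sum_comm]
  refine sum_le_sum fun x _ ↦ ?_
  have hnonneg : ∀ p ∈ (univ : Finset ι).offDiag, 0 ≤ if x p.1 = x p.2 then F x else 0 :=
    fun p _ ↦ ite_nonneg (hF x) le_rfl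
  by_cases hx : Function.Injective x
  · rw [if_neg (not_not.2 hx)]
    exact sum_nonneg hnonneg
  · obtain ⟨i, j, hxij, hij⟩ := Function.not_injective_iff.1 hx
    have hmem : (i, j) ∈ (univ : Finset ι).offDiag := by simpa using hij
    simpa [hx, hxij] using single_le_sum hnonneg hmem

section Compositions

variable {ι : Type*} [Fintype ι] [DecidableEq ι]

theorem coeff_prod_eq_sum_piAntidiag {R : Type*} [CommSemiring R] (G : ι → R⟦X⟧) (n : ℕ) :
    coeff n (∏ i, G i) = ∑ x ∈ piAntidiag univ n, ∏ i, coeff (x i) (G i) := by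
  rw [coeff_prod]
  refine sum_bij' (fun l _ ↦ ⇑l) (fun x _ ↦ Finsupp.equivFunOnFinite.symm x) ?_ ?_ ?_ ?_ ?_ <;>
    simp +contextual [mem_finsuppAntidiag]

theorem coeff_mk_pow_card {R : Type*} [CommSemiring R] (f : ℕ → R) (n : ℕ) :
    coeff n (mk f ^ Fintype.card ι) = ∑ x ∈ piAntidiag (univ : Finset ι) n, ∏ i, f (x i) := by
  simpa only [prod_const, card_univ, coeff_mk] using
    coeff_prod_eq_sum_piAntidiag (fun _ : ι ↦ mk f) n

theorem le_of_mem_piAntidiag_univ {n : ℕ} {x : ι → ℕ} (hx : x ∈ piAntidiag univ n) (i : ι) :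
    x i ≤ n :=
  (mem_piAntidiag.1 hx).1 ▸ single_le_sum (fun _ _ ↦ Nat.zero_le _) (mem_univ i)

section Diagonal

variable {R : Type*} [CommRing R]

theorem coeff_expand_mul_eq_sum_monomial {p : ℕ} (hp : p ≠ 0) (φ ψ : R⟦X⟧) (n : ℕ) :
    coeff n (expand p hp φ * ψ) =
      ∑ t ∈ range (n + 1), coeff n (monomial (p * t) (coeff t φ) * ψ) := by
  simp only [coeff_mul]
  rw [sum_comm]
  refine sum_congr rfl fun ⟨u, v⟩ huv ↦ ?_
  rw [← sum_mul]
  congr 1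
  have hle : u ≤ n := by
    rw [← mem_antidiagonal.1 huv]
    exact Nat.le_add_right u v
  simp only [coeff_monomial]
  by_cases hdvd : p ∣ u
  · obtain ⟨t, rfl⟩ := hdvd
    have ht : t ∈ range (n + 1) :=
      mem_range_succ_iff.2 ((Nat.le_mul_of_pos_left t hp.bot_lt).trans hle)
    simp [coeff_expand_mul, hp, ht]
  · rw [coeff_expand_of_not_dvd p hp _ hdvd, sum_eq_zero fun t _ ↦ if_neg ?_]
    rintro rfl
    exact hdvd (dvd_mul_right p t)

variable {i j : ι}

theorem prod_ite_eq_or_eq_mul_pow (hij : i ≠ j) {M : Type*} [CommMonoid M] (a b : M) :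
    ∏ k, (if k = i ∨ k = j then a else b) = a ^ 2 * b ^ (Fintype.card ι - 2) := by
  have hpair : ({k | k = i ∨ k = j} : Finset ι) = {i, j} := by
    ext k
    simp
  have hcompl : ({k | ¬(k = i ∨ k = j)} : Finset ι) = {i, j}ᶜ := by
    rw [← hpair, compl_filter]
  rw [prod_ite, prod_const, prod_const, hpair, hcompl, card_compl, card_pair hij]

theorem sum_piAntidiag_filter_eq_and_eq (hij : i ≠ j) (f : ℕ → R) (n t : ℕ) :
    ∑ x ∈ piAntidiag univ n with x i = t ∧ x j = t, ∏ k, f (x k) =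
      coeff n (monomial (2 * t) (f t ^ 2) * mk f ^ (Fintype.card ι - 2)) := by
  rw [two_mul, sq, ← monomial_mul_monomial, ← sq, ← prod_ite_eq_or_eq_mul_pow hij,
    coeff_prod_eq_sum_piAntidiag, sum_filter]
  refine sum_congr rfl fun x _ ↦ ?_
  split_ifs with hx
  · refine prod_congr rfl fun k _ ↦ ?_
    split_ifs with hk
    · rcases hk with rfl | rfl <;> simp [hx]
    · rw [coeff_mk]
  · symm
    rcases not_and_or.1 hx with hxi | hxj
    · exact prod_eq_zero (mem_univ i) (by simp [coeff_monomial, hxi])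
    · exact prod_eq_zero (mem_univ j) (by simp [coeff_monomial, hxj])

theorem sum_piAntidiag_filter_apply_eq_apply (hij : i ≠ j) (f : ℕ → R) (n : ℕ) :
    ∑ x ∈ piAntidiag univ n with x i = x j, ∏ k, f (x k) =
      coeff n (expand 2 two_ne_zero (mk fun t ↦ f t ^ 2) * mk f ^ (Fintype.card ι - 2)) := by
  have hmaps : ∀ x ∈ ({x ∈ piAntidiag univ n | x i = x j} : Finset (ι → ℕ)),
      x i ∈ range (n + 1) := fun x hx ↦
    mem_range_succ_iff.2 (le_of_mem_piAntidiag_univ (mem_filter.1 hx).1 i)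
  rw [coeff_expand_mul_eq_sum_monomial, ← sum_fiberwise_of_maps_to hmaps]
  refine sum_congr rfl fun t _ ↦ ?_
  rw [coeff_mk, ← sum_piAntidiag_filter_eq_and_eq hij, filter_filter]
  refine sum_congr (filter_congr fun x _ ↦ ?_) fun _ _ ↦ rfl
  constructor <;> rintro ⟨h, rfl⟩ <;> simp [h]

end Diagonal

theorem sum_piAntidiag_filter_not_injective_le {f : ℕ → ℝ} (hf : ∀ t, 0 ≤ f t) (n : ℕ) :
    ∑ x ∈ piAntidiag (univ : Finset ι) n with ¬Function.Injective x, ∏ k, f (x k) ≤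
      #(univ : Finset ι).offDiag *
        coeff n (expand 2 two_ne_zero (mk fun t ↦ f t ^ 2) * mk f ^ (Fintype.card ι - 2)) := by
  refine (sum_filter_not_injective_le fun x ↦ prod_nonneg fun k _ ↦ hf (x k)).trans_eq ?_
  rw [← nsmul_eq_mul]
  refine sum_eq_card_nsmul fun p hp ↦ ?_
  exact sum_piAntidiag_filter_apply_eq_apply (mem_offDiag.1 hp).2.2 f n

end Compositions

section Sorting

variable {s : ℕ}

theorem existsUnique_perm_strictAnti_comp {α : Type*} [LinearOrder α] {x : Fin s → α}
    (hx : Function.Injective x) : ∃! σ : Equiv.Perm (Fin s), StrictAnti (x ∘ σ) := by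
  have hanti : Antitone (x ∘ Tuple.sort (OrderDual.toDual ∘ x)) :=
    fun i j hij ↦ Tuple.monotone_sort (OrderDual.toDual ∘ x) hij
  refine ⟨_, hanti.strictAnti_of_injective (hx.comp (Equiv.injective _)), fun τ hτ ↦ ?_⟩
  ext i
  exact congrArg _ (hx (congrFun (Tuple.unique_antitone hτ.antitone hanti) i))

theorem card_filter_strictAnti_comp {α : Type*} [LinearOrder α] (x : Fin s → α) :
    #{σ : Equiv.Perm (Fin s) | StrictAnti (x ∘ σ)} = if Function.Injective x then 1 else 0 := by
  split_ifs with hx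
  · rw [card_eq_one]
    obtain ⟨σ, hσ, hunique⟩ := existsUnique_perm_strictAnti_comp hx
    exact ⟨σ, eq_singleton_iff_unique_mem.2
      ⟨mem_filter_univ σ |>.2 hσ, fun τ hτ ↦ hunique τ (mem_filter_univ τ |>.1 hτ)⟩⟩
  · rw [card_eq_zero, filter_eq_empty_iff]
    exact fun σ _ hσ ↦ hx ((Equiv.injective_comp σ x).1 hσ.injective)

theorem sum_filter_injective_eq_factorial_mul {α R : Type*} [LinearOrder α] [Semiring R]
    {S : Finset (Fin s → α)} {F : (Fin s → α) → R}
    (hS : ∀ (σ : Equiv.Perm (Fin s)) x, x ∘ σ ∈ S ↔ x ∈ S)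
    (hF : ∀ (σ : Equiv.Perm (Fin s)) x, F (x ∘ σ) = F x) :
    ∑ x ∈ S with Function.Injective x, F x = s.factorial * ∑ x ∈ S with StrictAnti x, F x := by
  have hperm (σ : Equiv.Perm (Fin s)) :
      ∑ x ∈ S with StrictAnti (x ∘ σ), F x = ∑ x ∈ S with StrictAnti x, F x :=
    sum_equiv (σ.symm.arrowCongr (.refl α)) (fun x ↦ by simp [← hS σ x, Equiv.arrowCongr])
      fun x _ ↦ (hF σ x).symm
  calc ∑ x ∈ S with Function.Injective x, F x
      = ∑ x ∈ S, ∑ σ : Equiv.Perm (Fin s), if StrictAnti (x ∘ σ) then F x else 0 := by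
        rw [sum_filter]
        refine sum_congr rfl fun x _ ↦ ?_
        rw [← sum_filter, sum_const, card_filter_strictAnti_comp]
        split_ifs <;> simp
    _ = ∑ σ : Equiv.Perm (Fin s), ∑ x ∈ S with StrictAnti (x ∘ σ), F x := by
        rw [sum_comm]
        simp only [sum_filter]
    _ = s.factorial * ∑ x ∈ S with StrictAnti x, F x := by
        simp only [hperm, sum_const, card_univ, Fintype.card_perm, Fintype.card_fin, nsmul_eq_mul]

end Sorting

theorem isBigO_coeff_expand_sq_rpow (r : ℝ) :
    (fun n ↦ coeff n (expand 2 two_ne_zero (mk fun t : ℕ ↦ ((t : ℝ) ^ r) ^ 2))) =O[atTop]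
      fun n : ℕ ↦ (n : ℝ) ^ (2 * r) := by
  refine IsBigO.of_bound (2⁻¹ ^ (2 * r)) (.of_forall fun n ↦ ?_)
  rw [coeff_expand]
  split_ifs with hn
  · refine le_of_eq ?_
    rw [coeff_mk, Nat.cast_div_charZero hn, ← Real.rpow_mul_natCast (by positivity),
      Nat.cast_ofNat, mul_comm r 2, div_eq_inv_mul, Real.mul_rpow (by positivity) (by positivity),
      norm_mul, Real.norm_of_nonneg (by positivity)]
  · rw [norm_zero]
    positivity

theorem isBigO_coeff_expand_sq_mul_rpowSeries_pow {a : ℝ} (ha0 : 0 < a) {k : ℕ}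
    (hka : (k + 2) * a ≤ 1) :
    (fun n ↦ coeff n (expand 2 two_ne_zero (mk fun t : ℕ ↦ ((t : ℝ) ^ (a - 1)) ^ 2) *
        rpowSeries (a - 1) ^ k)) =O[atTop] fun n : ℕ ↦ (n : ℝ) ^ (k * a - 1) := by
  have hdiag := isBigO_coeff_expand_sq_rpow (a - 1)
  rcases k.eq_zero_or_pos with rfl | hk
  · simp only [pow_zero, mul_one, Nat.cast_zero, zero_mul, zero_add] at hka ⊢
    exact hdiag.trans (isBigO_natCast_rpow_of_le (by linarith))
  · have hk1 : (1 : ℝ) ≤ k := by exact_mod_cast hk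
    have hP := isBigO_coeff_rpowSeries_pow ha0 (by nlinarith) (k := k) (by nlinarith)
    rw [mul_comm]
    exact isBigO_coeff_mul_of_lt_neg_one (by nlinarith) (by nlinarith) (by nlinarith) hP hdiag

theorem isBigO_sum_piAntidiag_filter_not_injective {a : ℝ} (ha0 : 0 < a) {ι : Type*} [Fintype ι]
    [DecidableEq ι] (hι : 2 ≤ Fintype.card ι) (hιa : Fintype.card ι * a ≤ 1) :
    (fun n : ℕ ↦ ∑ x ∈ piAntidiag (univ : Finset ι) n with ¬Function.Injective x,
        ∏ i, (x i : ℝ) ^ (a - 1)) =O[atTop]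
      fun n : ℕ ↦ (n : ℝ) ^ ((Fintype.card ι - 1) * a - 1) := by
  have hcast : ((Fintype.card ι - 2 : ℕ) : ℝ) = Fintype.card ι - 2 := by
    rw [Nat.cast_sub hι, Nat.cast_ofNat]
  have hdiag := isBigO_coeff_expand_sq_mul_rpowSeries_pow ha0 (k := Fintype.card ι - 2)
    (by rwa [hcast, sub_add_cancel])
  refine (IsBigO.of_norm_le fun n ↦ ?_).trans
    ((hdiag.trans (isBigO_natCast_rpow_of_le ?_)).const_mul_left #(univ : Finset ι).offDiag)
  · rw [Real.norm_of_nonneg (by positivity)]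
    exact sum_piAntidiag_filter_not_injective_le (f := fun t ↦ (t : ℝ) ^ (a - 1))
      (fun t ↦ by positivity) n
  · rw [hcast]
    linarith

theorem isBigO_sum_piAntidiag_sub {a : ℝ} (ha0 : 0 < a) (ha1 : a < 1) {ι : Type*} [Fintype ι]
    [DecidableEq ι] [Nonempty ι] (hιa : (Fintype.card ι - 1) * a ≤ 1) :
    (fun n : ℕ ↦ (∑ x ∈ piAntidiag (univ : Finset ι) n, ∏ i, (x i : ℝ) ^ (a - 1)) -
        Real.Gamma a ^ Fintype.card ι * Ring.multichoose (Fintype.card ι * a) n) =O[atTop]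
      fun n : ℕ ↦ (n : ℝ) ^ ((Fintype.card ι - 1) * a - 1) := by
  obtain ⟨k, hk⟩ := Nat.exists_eq_add_one.2 (Fintype.card_pos (α := ι))
  have hcast : (Fintype.card ι : ℝ) - 1 = k := by simp [hk]
  have hcoeff (n : ℕ) : ∑ x ∈ piAntidiag (univ : Finset ι) n, ∏ i, (x i : ℝ) ^ (a - 1) =
      coeff n (rpowSeries (a - 1) ^ Fintype.card ι) :=
    (coeff_mk_pow_card (fun t : ℕ ↦ (t : ℝ) ^ (a - 1)) n).symm
  rw [hcast] at hιa ⊢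
  simpa only [hcoeff, hk] using isBigO_coeff_rpowSeries_pow_succ_sub ha0 ha1 hιa

theorem isBigO_sum_piAntidiag_filter_strictAnti_sub {a : ℝ} (ha0 : 0 < a) {s : ℕ} (hs : 2 ≤ s)
    (hsa : s * a ≤ 1) :
    (fun n : ℕ ↦ (∑ x ∈ piAntidiag (univ : Finset (Fin s)) n with StrictAnti x,
        ∏ i, (x i : ℝ) ^ (a - 1)) -
        Real.Gamma a ^ s / s.factorial * Ring.multichoose (s * a) n) =O[atTop]
      fun n : ℕ ↦ (n : ℝ) ^ ((s - 1) * a - 1) := by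
  have hs2 : (2 : ℝ) ≤ s := by exact_mod_cast hs
  have : Nonempty (Fin s) := ⟨⟨0, by lia⟩⟩
  have hall := isBigO_sum_piAntidiag_sub ha0 (by nlinarith) (ι := Fin s)
    (by rw [Fintype.card_fin]; linarith)
  have hrepeated := isBigO_sum_piAntidiag_filter_not_injective ha0 (ι := Fin s) (by simpa using hs)
    (by simpa using hsa)
  rw [Fintype.card_fin] at hall hrepeated
  refine ((hall.sub hrepeated).const_mul_left (s.factorial : ℝ)⁻¹).congr_left fun n ↦ ?_
  have hinjective := sum_filter_injective_eq_factorial_mul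
    (S := piAntidiag (univ : Finset (Fin s)) n) (F := fun x ↦ ∏ i, (x i : ℝ) ^ (a - 1))
    (fun σ x ↦ by simp [Equiv.sum_comp σ x])
    fun σ x ↦ Equiv.prod_comp σ fun i ↦ (x i : ℝ) ^ (a - 1)
  rw [← sum_filter_add_sum_filter_not _ Function.Injective, hinjective]
  field_simp
  ring

theorem sum_piFinset_Icc_filter_eq_sum_piAntidiag_filter_strictAnti (s n : ℕ) {r : ℝ} (hr : r ≠ 0) :
    ∑ x ∈ Fintype.piFinset fun _ : Fin s ↦ Icc 1 n with
        (∀ i j : Fin s, i < j → x j < x i) ∧ ∑ i, x i = n, ∏ i, (x i : ℝ) ^ r =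
      ∑ x ∈ piAntidiag (univ : Finset (Fin s)) n with StrictAnti x, ∏ i, (x i : ℝ) ^ r := by
  refine sum_subset (fun x hx ↦ ?_) fun x hx hx' ↦ ?_
  · obtain ⟨-, hanti, hsum⟩ := mem_filter.1 hx
    exact mem_filter.2 ⟨mem_piAntidiag.2 ⟨hsum, fun i _ ↦ mem_univ i⟩, hanti⟩
  · obtain ⟨hmem, hanti⟩ := mem_filter.1 hx
    obtain ⟨i, hi⟩ : ∃ i, x i = 0 := by
      by_contra! hne
      refine hx' (mem_filter.2 ⟨Fintype.mem_piFinset.2 fun i ↦ mem_Icc.2 ?_, hanti,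
        (mem_piAntidiag.1 hmem).1⟩)
      exact ⟨Nat.one_le_iff_ne_zero.2 (hne i), le_of_mem_piAntidiag_univ hmem i⟩
    exact prod_eq_zero (mem_univ i) (by rw [hi, Nat.cast_zero, Real.zero_rpow hr])

theorem pow_mul_lambdaS {s : ℕ} (hs : s ≠ 0) :
    (s : ℝ) ^ s * lambdaS s = Real.Gamma (1 / s) ^ s / s.factorial := by
  unfold lambdaS
  field_simp

theorem stmt_17_general (s : ℕ) (hs : 2 ≤ s) :
    ∃ C : ℝ, 0 < C ∧ ∀ n : ℕ, 1 ≤ n →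
      |(∑ x ∈ (Fintype.piFinset fun _ : Fin s => Finset.Icc 1 n).filter
            (fun x : Fin s → ℕ => (∀ i j : Fin s, i < j → x j < x i) ∧ ∑ i, x i = n),
          ∏ i, (x i : ℝ) ^ (-1 + 1 / (s : ℝ))) -
        (s : ℝ) ^ s * lambdaS s| ≤
      C * (n : ℝ) ^ (-(1 : ℝ) / s) := by
  have hs2 : (2 : ℝ) ≤ s := by exact_mod_cast hs
  have hinv : 1 / (s : ℝ) < 1 := (div_lt_one (by positivity)).2 (by linarith)
  have hmul : (s : ℝ) * (1 / s) = 1 := mul_one_div_cancel (by positivity)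
  have hexp : ((s : ℝ) - 1) * (1 / s) - 1 = -1 / s := by
    field_simp
    ring
  have hasymp := isBigO_sum_piAntidiag_filter_strictAnti_sub (a := 1 / s) (by positivity) hs hmul.le
  simp only [hexp, hmul, Ring.multichoose_one, mul_one] at hasymp
  obtain ⟨C, hC, hbound⟩ := bound_of_isBigO_nat_atTop hasymp
  refine ⟨C, hC, fun n hn ↦ ?_⟩
  rw [neg_add_eq_sub, pow_mul_lambdaS (by lia),
    sum_piFinset_Icc_filter_eq_sum_piAntidiag_filter_strictAnti s n (by linarith)]
  have hpow : 0 < (n : ℝ) ^ (-(1 : ℝ) / s) := by positivity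
  simpa only [Real.norm_eq_abs, abs_of_pos hpow] using hbound (ne_of_gt hpow)

/-- The refinement of Lemma 1 (iii): the sum over tuples of positive integers
`1 ≤ x_s < ⋯ < x_1` with `x_1 + ⋯ + x_s = n` of `(x_1 ⋯ x_s)^{-1+1/s}` equals
`s^s λ_s + O(n^{-1/(s+1)})`. -/
theorem stmt_17 (s : ℕ) (hs : 2 ≤ s) :
    ∃ C : ℝ, 0 < C ∧ ∀ n : ℕ, 1 ≤ n →
      |(∑ x ∈ (Fintype.piFinset fun _ : Fin s => Finset.Icc 1 n).filter
            (fun x : Fin s → ℕ => (∀ i j : Fin s, i < j → x j < x i) ∧ ∑ i, x i = n),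
          ∏ i, (x i : ℝ) ^ (-1 + 1 / (s : ℝ))) -
        (s : ℝ) ^ s * lambdaS s| ≤
      C * (n : ℝ) ^ (-(1 : ℝ) / (s + 1)) := by
  obtain ⟨C, hC, hbound⟩ := stmt_17_general s hs
  refine ⟨C, hC, fun n hn ↦ (hbound n hn).trans ?_⟩
  have hn1 : (1 : ℝ) ≤ n := by exact_mod_cast hn
  rw [neg_div, neg_div]
  gcongr
  linarith
end
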